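/- arXiv:0911.5086 — 3 statements merged into one kernel-verified Lean document; each statement's English description precedes it below -/
import Mathlib

section
/- Fix an odd integer d ≥ 3 and an integer m ≥ 2. There exists a constant c > 0, depending only on d and m, with the following property: for any m parallel hyperplanes Π_1, …, Π_m in E^{d+1} and finite sets P_i ⊂ Π_i such that each 𝒫_i = conv(P_i) is a d-dimensional polytope with n_i vertices, the total number of nonempty exposed faces of 𝒫 = conv(P_1 ∪ … ∪ P_m) is at most c · Σ_{1 ≤ i ≠ j ≤ m} n_i · n_j^{⌊d/2⌋}. (Upper bound part of Theorem 2.6.) -/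
/-!
Write `d + 1 = 2 (k + 1)`, so that `d / 2 = k`, and let `S` be the set of all vertices of the given
polytopes.

**Polarity and signatures.** With the centroid of `S` as origin, proper faces of `conv S` correspond
to points `y` of the polar polyhedron `⟨v_p, y⟩ ≤ 1`. The right-hand sides are perturbed generically,
so that tight constraints are linearly independent; each face of `conv S` then still contains a
spanning set which is part of a feasible basis `B` (the tight set of a vertex of the perturbed
polar), see `exists_perturbation`. Expand a fixed generic vector `c` in the basis `B` and split `B`
into the parts with positive and with negative coefficients. Each part determines `B`: the vertex is
the unique minimizer (maximizer) of `c` on the face of the polar where the constraints of the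
positive (negative) part are equalities (`tight_eq_of_pos_eq`, `exists_bases`).

**Counting.** Let `Π` be the hyperplane carrying the most vertices and `O` the set of vertices off
`Π`. A face not contained in `Π` yields a basis `B` of size `2 (k + 1)` meeting `O`. Either one part
of `B` has at most `k` elements, or both have `k + 1` and one of them meets `O`; hence there are at
most a constant times `|O| |S| ^ k` such bases (`card_bases_le`) and such faces
(`card_proper_faces_le`). A face inside `Π` is turned into a face leaving `Π` by rotating its
supporting hyperplane about the intersection with `Π` (`IsFaceSet.exists_rotate`), which at most
doubles the count. Since `Π` carries the most vertices, `|S| ≤ m n_Π`, and `|O| |S| ^ k` is at most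
`m ^ k ∑_{i ≠ Π} n_i n_Π ^ k`.
-/

open Set Pointwise RealInnerProductSpace

/-- The dimension of the affine hull of a set. -/
noncomputable def adim {N : ℕ} (F : Set (EuclideanSpace ℝ (Fin N))) : ℕ :=
  Module.finrank ℝ (vectorSpan ℝ F)

/-- The combinatorial complexity of `C`: the number of nonempty exposed faces of `C`. -/
noncomputable def totalFaces {N : ℕ} (C : Set (EuclideanSpace ℝ (Fin N))) : ℕ :=
  {F : Set (EuclideanSpace ℝ (Fin N)) | IsExposed ℝ C F ∧ F.Nonempty}.ncard

/-! ### Tight constraints and general position -/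

section LinearAlgebra

variable {V : Type*} [AddCommGroup V] [Module ℝ V] {ι : Type*}

open scoped Classical in
/-- The constraints `y (v p) ≤ b p`, `p ∈ T`, which hold with equality at `y`. -/
noncomputable def tightSet (v : ι → V) (b : ι → ℝ) (T : Finset ι) (y : V →ₗ[ℝ] ℝ) : Finset ι :=
  T.filter fun p => y (v p) = b p

theorem mem_tightSet {v : ι → V} {b : ι → ℝ} {T : Finset ι} {y : V →ₗ[ℝ] ℝ} {p : ι} :
    p ∈ tightSet v b T y ↔ p ∈ T ∧ y (v p) = b p := by
  simp [tightSet]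

/-- From any feasible `y` one can walk inside the face of the feasible polyhedron containing `y`
until the tight constraints span the same space as all constraints. -/
theorem exists_spanning_tight [Fintype ι] (v : ι → V) (b : ι → ℝ) (T : Finset ι) (y : V →ₗ[ℝ] ℝ)
    (hy : ∀ p ∈ T, y (v p) ≤ b p) :
    ∃ z : V →ₗ[ℝ] ℝ, (∀ p ∈ T, z (v p) ≤ b p) ∧ tightSet v b T y ⊆ tightSet v b T z ∧
      ∀ p ∈ T, v p ∈ Submodule.span ℝ (v '' (tightSet v b T z : Set ι)) := by
  classical
  -- Among the feasible points keeping the constraints tight at `y`, take one with the largest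
  -- set of tight constraints.
  let good : Set (Finset ι) := {A | ∃ z : V →ₗ[ℝ] ℝ, (∀ p ∈ T, z (v p) ≤ b p) ∧
    tightSet v b T y ⊆ tightSet v b T z ∧ tightSet v b T z = A}
  obtain ⟨A, ⟨z, hz, hyz, rfl⟩, hmax⟩ := (Set.toFinite good).exists_maximalFor Finset.card good
    ⟨_, y, hy, subset_rfl, rfl⟩
  refine ⟨z, hz, hyz, ?_⟩
  by_contra! hcon
  obtain ⟨p₀, hp₀, hspan⟩ := hcon
  obtain ⟨f, hf0, hfker⟩ := Submodule.exists_le_ker_of_notMem hspan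
  obtain ⟨g, hgpos, hgker⟩ : ∃ g : V →ₗ[ℝ] ℝ, 0 < g (v p₀) ∧
      ∀ p ∈ tightSet v b T z, g (v p) = 0 := by
    have hker : ∀ p ∈ tightSet v b T z, f (v p) = 0 := fun p hp =>
      hfker (Submodule.subset_span ⟨p, hp, rfl⟩)
    rcases lt_or_gt_of_ne hf0 with h | h
    · exact ⟨-f, by simpa using h, fun p hp => by simp [hker p hp]⟩
    · exact ⟨f, h, hker⟩
  -- The ratio test: the largest step in direction `g` which stays feasible.
  obtain ⟨q, hq, hqmin⟩ := Finset.exists_min_image (T.filter fun p => 0 < g (v p))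
    (fun p => (b p - z (v p)) / g (v p)) ⟨p₀, by simp [hp₀, hgpos]⟩
  rw [Finset.mem_filter] at hq
  set s := (b q - z (v q)) / g (v q) with hs
  have hs0 : 0 ≤ s := div_nonneg (by linarith [hz q hq.1]) hq.2.le
  have hfeas : ∀ p ∈ T, (z + s • g) (v p) ≤ b p := by
    intro p hp
    have h1 := hz p hp
    simp only [LinearMap.add_apply, LinearMap.smul_apply, smul_eq_mul]
    by_cases hg : 0 < g (v p)
    · have := hqmin p (by simp [hp, hg])
      rw [le_div_iff₀ hg] at this
      linarith
    · have := mul_nonneg hs0 (neg_nonneg.2 (not_lt.1 hg))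
      linarith
  have hsub : tightSet v b T z ⊆ tightSet v b T (z + s • g) := by
    intro p hp
    have h0 := hgker p hp
    rw [mem_tightSet] at hp ⊢
    simpa [h0] using hp
  have hqnew : q ∈ tightSet v b T (z + s • g) := by
    rw [mem_tightSet]
    refine ⟨hq.1, ?_⟩
    have : s * g (v q) = b q - z (v q) := by rw [hs]; field_simp [hq.2.ne']
    simp [this]
  have hqold : q ∉ tightSet v b T z := fun h => hq.2.ne' (hgker q h)
  have hlt : (tightSet v b T z).card < (tightSet v b T (z + s • g)).card :=
    Finset.card_lt_card ⟨hsub, fun h => hqold (h hqnew)⟩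
  have := hmax (j := tightSet v b T (z + s • g)) ⟨_, hfeas, hyz.trans hsub, rfl⟩ hlt.le
  exact absurd this (not_le.2 hlt)

/-- Finitely many proper subspaces of a real vector space do not cover it. -/
theorem exists_notMem_of_ne_top {W : Type*} [AddCommGroup W] [Module ℝ W] {κ : Type*} [Finite κ]
    (U : κ → Submodule ℝ W) : ∃ c : W, ∀ A, U A ≠ ⊤ → c ∉ U A := by
  classical
  have := Fintype.ofFinite κ
  have h := Subspace.biUnion_ne_univ_of_top_notMem
    (s := (Finset.univ.image U).filter fun M => M ≠ ⊤) (by simp)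
  rw [Ne, Set.eq_univ_iff_forall] at h
  push Not at h
  obtain ⟨c, hc⟩ := h
  refine ⟨c, fun A hA hcA => hc ?_⟩
  simp only [Set.mem_iUnion]
  exact ⟨U A, by simpa using hA, hcA⟩

/-- A vector in general position with respect to a finite family. -/
theorem exists_generic_vector [Fintype ι] [FiniteDimensional ℝ V] (v : ι → V) :
    ∃ c : V, ∀ A : Finset ι, A.card < Module.finrank ℝ V →
      c ∉ Submodule.span ℝ (v '' (A : Set ι)) := by
  classical
  obtain ⟨c, hc⟩ := exists_notMem_of_ne_top
    (fun A : Finset ι => Submodule.span ℝ (v '' (A : Set ι)))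
  refine ⟨c, fun A hA => hc A fun htop => ?_⟩
  have h1 := finrank_span_finset_le_card (R := ℝ) (A.image v)
  rw [Set.finrank, Finset.coe_image, htop, finrank_top] at h1
  have := Finset.card_image_le (s := A) (f := v)
  omega

/-- A perturbation direction `w` of the right-hand sides in general position: no linearly
dependent subfamily is simultaneously solvable. -/
theorem exists_generic_rhs [Fintype ι] (v : ι → V) :
    ∃ w : ι → ℝ, ∀ A : Finset ι, ¬ LinearIndepOn ℝ v (A : Set ι) →
      ¬ ∃ z : V →ₗ[ℝ] ℝ, ∀ p ∈ A, z (v p) = w p := by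
  classical
  let U : Finset ι → Submodule ℝ (ι → ℝ) := fun A =>
    { carrier := {w | ∃ z : V →ₗ[ℝ] ℝ, ∀ p ∈ A, z (v p) = w p}
      add_mem' := by
        rintro a b ⟨y, hy⟩ ⟨z, hz⟩
        exact ⟨y + z, fun p hp => by simp [hy p hp, hz p hp]⟩
      zero_mem' := ⟨0, fun p _ => by simp⟩
      smul_mem' := by
        rintro r a ⟨y, hy⟩
        exact ⟨r • y, fun p hp => by simp [hy p hp]⟩ }
  obtain ⟨w, hw⟩ := exists_notMem_of_ne_top U
  refine ⟨w, fun A hA => hw A fun htop => hA ?_⟩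
  rw [linearIndepOn_finset_iff]
  intro f hf q hq
  have : (Pi.single q 1 : ι → ℝ) ∈ U A := htop ▸ Submodule.mem_top
  obtain ⟨z, hz⟩ := this
  have h2 := congrArg z hf
  rw [map_sum, map_zero, Finset.sum_eq_single q] at h2
  · simpa [hz q hq] using h2
  · intro p hp hpq
    simp [hz p hp, hpq]
  · exact fun h => absurd hq h

/-- A basis of tight constraints at a feasible point is determined by the constraints having
positive coefficients in the expansion of `c`: the point is the unique minimizer of `c` on the
face of the polyhedron where those constraints are equalities. -/
theorem tight_eq_of_pos_eq (v : ι → V) (b : ι → ℝ) (c : V) {y₁ y₂ : V →ₗ[ℝ] ℝ}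
    (h₁ : ∀ p, y₁ (v p) ≤ b p) (h₂ : ∀ p, y₂ (v p) ≤ b p) {B₁ B₂ : Finset ι}
    (hB₁ : ∀ p, p ∈ B₁ ↔ y₁ (v p) = b p) (hB₂ : ∀ p, p ∈ B₂ ↔ y₂ (v p) = b p)
    {r₁ r₂ : ι → ℝ} (hr₁ : ∀ p ∈ B₁, r₁ p ≠ 0) (hr₂ : ∀ p ∈ B₂, r₂ p ≠ 0)
    (hc₁ : ∑ p ∈ B₁, r₁ p • v p = c) (hc₂ : ∑ p ∈ B₂, r₂ p • v p = c)
    (hpos : ∀ p, (p ∈ B₁ ∧ 0 < r₁ p) ↔ (p ∈ B₂ ∧ 0 < r₂ p)) : B₁ = B₂ := by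
  have key : ∀ {y₁ y₂ : V →ₗ[ℝ] ℝ} {B₁ B₂ : Finset ι} {r₁ r₂ : ι → ℝ},
      (∀ p, y₂ (v p) ≤ b p) →
      (∀ p, p ∈ B₁ ↔ y₁ (v p) = b p) → (∀ p, p ∈ B₂ ↔ y₂ (v p) = b p) →
      (∑ p ∈ B₁, r₁ p • v p = c) →
      (∀ p, (p ∈ B₁ ∧ 0 < r₁ p) ↔ (p ∈ B₂ ∧ 0 < r₂ p)) →
      (∀ p ∈ B₁, r₁ p * y₁ (v p) ≤ r₁ p * y₂ (v p)) ∧ y₁ c ≤ y₂ c := by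
    intro y₁ y₂ B₁ B₂ r₁ r₂ h₂ hB₁ hB₂ hc₁ hpos
    have hterm : ∀ p ∈ B₁, r₁ p * y₁ (v p) ≤ r₁ p * y₂ (v p) := by
      intro p hp
      rw [(hB₁ p).1 hp]
      by_cases hr : 0 < r₁ p
      · rw [(hB₂ p).1 ((hpos p).1 ⟨hp, hr⟩).1]
      · exact mul_le_mul_of_nonpos_left (h₂ p) (not_lt.1 hr)
    refine ⟨hterm, ?_⟩
    rw [← hc₁, map_sum, map_sum]
    exact Finset.sum_le_sum fun p hp => by simpa using hterm p hp
  have hsub : ∀ {y₁ y₂ : V →ₗ[ℝ] ℝ} {B₁ B₂ : Finset ι} {r₁ : ι → ℝ},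
      (∀ p, p ∈ B₁ ↔ y₁ (v p) = b p) → (∀ p, p ∈ B₂ ↔ y₂ (v p) = b p) →
      (∀ p ∈ B₁, r₁ p ≠ 0) → (∑ p ∈ B₁, r₁ p • v p = c) →
      (∀ p ∈ B₁, r₁ p * y₁ (v p) ≤ r₁ p * y₂ (v p)) → y₂ c ≤ y₁ c → B₁ ⊆ B₂ := by
    intro y₁ y₂ B₁ B₂ r₁ hB₁ hB₂ hr hc hterm hle p hp
    have heq : ∑ p ∈ B₁, r₁ p * y₁ (v p) = ∑ p ∈ B₁, r₁ p * y₂ (v p) := by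
      refine le_antisymm (Finset.sum_le_sum hterm) ?_
      rw [← hc, map_sum, map_sum] at hle
      simpa using hle
    have := (Finset.sum_eq_sum_iff_of_le hterm).1 heq p hp
    have := mul_left_cancel₀ (hr p hp) this
    rw [hB₂, ← this]
    exact (hB₁ p).1 hp
  obtain ⟨ht₁, hle₁⟩ := key h₂ hB₁ hB₂ hc₁ hpos
  obtain ⟨ht₂, hle₂⟩ := key h₁ hB₂ hB₁ hc₂ fun p => (hpos p).symm
  exact Finset.Subset.antisymm (hsub hB₁ hB₂ hr₁ hc₁ ht₁ hle₂) (hsub hB₂ hB₁ hr₂ hc₂ ht₂ hle₁)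

/-! ### Perturbed polar and feasible bases -/

/-- `T` is the set of indices of the points `v p` lying on the proper face of the hull cut out by
the hyperplane `y = 1`; normalizing the right-hand side to `1` makes `y` a point of the polar
polyhedron. The empty set is allowed. -/
def IsPolarFace (v : ι → V) (T : Finset ι) : Prop :=
  ∃ y : V →ₗ[ℝ] ℝ, (∀ p, y (v p) ≤ 1) ∧ ∀ p, p ∈ T ↔ y (v p) = 1

open Filter Topology in
/-- A generic perturbation `b` of the right-hand sides `1` of the polar polyhedron: it becomes
simple (tight constraints are independent), and every face `T` still contains a face of the
perturbed configuration that spans it. -/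
theorem exists_perturbation [Fintype ι] (v : ι → V) :
    ∃ b : ι → ℝ,
      (∀ y : V →ₗ[ℝ] ℝ, LinearIndepOn ℝ v (tightSet v b Finset.univ y : Set ι)) ∧
      ∀ T, IsPolarFace v T → ∃ y : V →ₗ[ℝ] ℝ, (∀ p, y (v p) ≤ b p) ∧
        tightSet v b Finset.univ y ⊆ T ∧
        ∀ p ∈ T, v p ∈ Submodule.span ℝ (v '' (tightSet v b Finset.univ y : Set ι)) := by
  classical
  obtain ⟨w, hw⟩ := exists_generic_rhs v
  -- For a dependent family `A` at most one `ε` makes the right-hand side `1 + ε w` solvable.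
  have hgen : ∀ A : Finset ι, ¬ LinearIndepOn ℝ v (A : Set ι) →
      ∀ᶠ ε in 𝓝[>] (0 : ℝ), ¬ ∃ z : V →ₗ[ℝ] ℝ, ∀ p ∈ A, z (v p) = 1 + ε * w p := by
    intro A hA
    have hsub : {ε : ℝ | ∃ z : V →ₗ[ℝ] ℝ, ∀ p ∈ A, z (v p) = 1 + ε * w p}.Subsingleton := by
      rintro ε₁ ⟨z₁, h₁⟩ ε₂ ⟨z₂, h₂⟩
      by_contra hne
      have hne' : ε₁ - ε₂ ≠ 0 := sub_ne_zero.2 hne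
      refine hw A hA ⟨(ε₁ - ε₂)⁻¹ • (z₁ - z₂), fun p hp => ?_⟩
      simp only [LinearMap.smul_apply, LinearMap.sub_apply, h₁ p hp, h₂ p hp, smul_eq_mul]
      field_simp
      ring
    have hfin := hsub.finite
    have hcl : IsClosed ({ε : ℝ | ∃ z : V →ₗ[ℝ] ℝ, ∀ p ∈ A, z (v p) = 1 + ε * w p} \ {0}) :=
      (hfin.subset sdiff_subset).isClosed
    filter_upwards [mem_nhdsWithin_of_mem_nhds (hcl.isOpen_compl.mem_nhds (x := 0) (by simp)),
      self_mem_nhdsWithin] with ε h1 h2 h3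
    exact h1 ⟨h3, (ne_of_gt h2 : ε ≠ 0)⟩
  have hface : ∀ T : Finset ι, IsPolarFace v T → ∀ᶠ ε in 𝓝[>] (0 : ℝ),
      ∃ y : V →ₗ[ℝ] ℝ, (∀ p, y (v p) ≤ 1 + ε * w p) ∧
        tightSet v (fun p => 1 + ε * w p) Finset.univ y ⊆ T ∧
        ∀ p ∈ T, v p ∈ Submodule.span ℝ
          (v '' (tightSet v (fun p => 1 + ε * w p) Finset.univ y : Set ι)) := by
    rintro T ⟨y, hy, hyT⟩
    -- The perturbed point is `y + ε z`, where `z` solves the first-order problem on `T`.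
    obtain ⟨z, hz, -, hspan⟩ := exists_spanning_tight v w T ((-∑ p, |w p|) • y) (by
      intro p hp
      have h1 : |w p| ≤ ∑ p, |w p| :=
        Finset.single_le_sum (fun i _ => abs_nonneg (w i)) (Finset.mem_univ p)
      have h2 := neg_abs_le (w p)
      simp only [LinearMap.smul_apply, (hyT p).1 hp, smul_eq_mul]
      linarith)
    have hout : ∀ᶠ ε in 𝓝[>] (0 : ℝ), ∀ p, p ∉ T → y (v p) + ε * z (v p) < 1 + ε * w p := by
      rw [eventually_all]
      intro p
      by_cases hp : p ∈ T
      · exact Eventually.of_forall fun _ h => absurd hp h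
      have hlt : y (v p) < 1 := lt_of_le_of_ne (hy p) fun h => hp ((hyT p).2 h)
      have hc : ContinuousAt (fun ε : ℝ => 1 + ε * w p - (y (v p) + ε * z (v p))) 0 := by
        fun_prop
      have := hc.eventually (lt_mem_nhds (a := 0) (by simpa using hlt))
      filter_upwards [mem_nhdsWithin_of_mem_nhds this] with ε h _
      linarith
    filter_upwards [hout, self_mem_nhdsWithin] with ε hε hpos
    have hpos : 0 < ε := hpos
    have htight : tightSet v (fun p => 1 + ε * w p) Finset.univ (y + ε • z) =
        tightSet v w T z := by
      ext p
      simp only [mem_tightSet, Finset.mem_univ, true_and, LinearMap.add_apply,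
        LinearMap.smul_apply, smul_eq_mul]
      by_cases hp : p ∈ T
      · simp [hp, (hyT p).1 hp, hpos.ne']
      · simp [hp, (hε p hp).ne]
    refine ⟨y + ε • z, fun p => ?_, ?_, ?_⟩
    · by_cases hp : p ∈ T
      · have := mul_le_mul_of_nonneg_left (hz p hp) hpos.le
        simpa [(hyT p).1 hp] using this
      · simpa using (hε p hp).le
    · rw [htight]
      exact fun p hp => (mem_tightSet.1 hp).1
    · rw [htight]
      exact hspan
  have hall₁ : ∀ᶠ ε in 𝓝[>] (0 : ℝ), ∀ A : Finset ι, ¬ LinearIndepOn ℝ v (A : Set ι) →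
      ¬ ∃ z : V →ₗ[ℝ] ℝ, ∀ p ∈ A, z (v p) = 1 + ε * w p := by
    rw [eventually_all]
    intro A
    by_cases hA : LinearIndepOn ℝ v (A : Set ι)
    · exact Eventually.of_forall fun _ h => absurd hA h
    · exact (hgen A hA).mono fun _ h _ => h
  have hall₂ : ∀ᶠ ε in 𝓝[>] (0 : ℝ), ∀ T : Finset ι, IsPolarFace v T →
      ∃ y : V →ₗ[ℝ] ℝ, (∀ p, y (v p) ≤ 1 + ε * w p) ∧
        tightSet v (fun p => 1 + ε * w p) Finset.univ y ⊆ T ∧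
        ∀ p ∈ T, v p ∈ Submodule.span ℝ
          (v '' (tightSet v (fun p => 1 + ε * w p) Finset.univ y : Set ι)) := by
    rw [eventually_all]
    intro T
    by_cases hT : IsPolarFace v T
    · exact (hface T hT).mono fun _ h _ => h
    · exact Eventually.of_forall fun _ h => absurd h hT
  obtain ⟨ε, h₁, h₂⟩ := (hall₁.and hall₂).exists
  refine ⟨fun p => 1 + ε * w p, fun y => ?_, h₂⟩
  by_contra hdep
  exact h₁ _ hdep ⟨y, fun p hp => (mem_tightSet.1 hp).2⟩

/-- A family `𝓑` of bases (the vertices of a generic perturbation of the polar polyhedron) such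
that every face is spanned by a part of some `B ∈ 𝓑`, together with a splitting of each basis into
two halves either of which determines it. The half `pos B` collects the positive coefficients of a
generic vector in the basis `B`. -/
theorem exists_bases [Fintype ι] [DecidableEq ι] [FiniteDimensional ℝ V] (v : ι → V)
    (hv : Submodule.span ℝ (range v) = ⊤) :
    ∃ (𝓑 : Finset (Finset ι)) (pos : Finset ι → Finset ι),
      (∀ B ∈ 𝓑, B.card = Module.finrank ℝ V ∧ pos B ⊆ B) ∧
      InjOn pos 𝓑 ∧ InjOn (fun B => B \ pos B) 𝓑 ∧
      ∀ T, IsPolarFace v T → ∃ B ∈ 𝓑,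
        ∀ p ∈ T, v p ∈ Submodule.span ℝ (v '' ((B ∩ T : Finset ι) : Set ι)) := by
  classical
  obtain ⟨b, hindep, hface⟩ := exists_perturbation v
  obtain ⟨c, hc⟩ := exists_generic_vector v
  let 𝓑 : Finset (Finset ι) := Finset.univ.filter fun B => ∃ y : V →ₗ[ℝ] ℝ,
    (∀ p, y (v p) ≤ b p) ∧ B = tightSet v b Finset.univ y ∧
      Submodule.span ℝ (v '' (B : Set ι)) = ⊤
  have hmem : ∀ B, B ∈ 𝓑 ↔ ∃ y : V →ₗ[ℝ] ℝ,
    (∀ p, y (v p) ≤ b p) ∧ B = tightSet v b Finset.univ y ∧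
      Submodule.span ℝ (v '' (B : Set ι)) = ⊤ := fun B => by simp [𝓑]
  have hcard : ∀ B ∈ 𝓑, B.card = Module.finrank ℝ V := by
    intro B hB
    obtain ⟨y, -, rfl, hspan⟩ := (hmem B).1 hB
    have h1 := finrank_span_eq_card (hindep y).linearIndependent
    rw [← image_eq_range, hspan, finrank_top] at h1
    simpa using h1.symm
  have hcoef : ∀ B : Finset ι, ∃ r : ι → ℝ, B ∈ 𝓑 →
      (∑ p ∈ B, r p • v p = c ∧ ∀ p ∈ B, r p ≠ 0) := by
    intro B
    by_cases hB : B ∈ 𝓑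
    swap
    · exact ⟨0, fun h => absurd h hB⟩
    obtain ⟨y, -, -, hspan⟩ := (hmem B).1 hB
    have hcB : c ∈ Submodule.span ℝ (v '' (B : Set ι)) := hspan ▸ Submodule.mem_top
    obtain ⟨r, hr⟩ := (Submodule.mem_span_image_finset_iff_exists_fun ℝ).1 hcB
    let r' : ι → ℝ := fun p => if h : p ∈ B then r ⟨p, h⟩ else 0
    have hr' : ∑ p ∈ B, r' p • v p = c := by
      rw [← hr, ← Finset.sum_coe_sort B]
      exact Finset.sum_congr rfl fun p _ => by simp [r']
    refine ⟨r', fun _ => ⟨hr', fun p hp h0 => ?_⟩⟩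
    refine hc (B.erase p) ?_ ?_
    · rw [← hcard B hB]
      exact Finset.card_erase_lt_of_mem hp
    · rw [← hr', ← Finset.add_sum_erase _ _ hp, h0, zero_smul, zero_add]
      exact Submodule.sum_mem _ fun q hq =>
        Submodule.smul_mem _ _ (Submodule.subset_span ⟨q, hq, rfl⟩)
  choose r hr using hcoef
  refine ⟨𝓑, fun B => B.filter fun p => 0 < r B p,
    fun B hB => ⟨hcard B hB, Finset.filter_subset _ _⟩, ?_, ?_, ?_⟩
  · intro B₁ hB₁ B₂ hB₂ heq
    obtain ⟨y₁, hy₁, ht₁, -⟩ := (hmem B₁).1 hB₁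
    obtain ⟨y₂, hy₂, ht₂, -⟩ := (hmem B₂).1 hB₂
    refine tight_eq_of_pos_eq v b c hy₁ hy₂ (fun p => ?_) (fun p => ?_) (hr B₁ hB₁).2 (hr B₂ hB₂).2
      (hr B₁ hB₁).1 (hr B₂ hB₂).1 fun p => ?_
    · rw [ht₁, mem_tightSet]; simp
    · rw [ht₂, mem_tightSet]; simp
    · simpa using Finset.ext_iff.1 heq p
  · -- The other half is the positive half with respect to `-c`.
    intro B₁ hB₁ B₂ hB₂ heq
    obtain ⟨y₁, hy₁, ht₁, -⟩ := (hmem B₁).1 hB₁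
    obtain ⟨y₂, hy₂, ht₂, -⟩ := (hmem B₂).1 hB₂
    refine tight_eq_of_pos_eq v b (-c) hy₁ hy₂ (fun p => ?_) (fun p => ?_)
      (r₁ := -r B₁) (r₂ := -r B₂)
      (fun p hp => by simpa using (hr B₁ hB₁).2 p hp)
      (fun p hp => by simpa using (hr B₂ hB₂).2 p hp)
      (by simp [← (hr B₁ hB₁).1]) (by simp [← (hr B₂ hB₂).1]) fun p => ?_
    · rw [ht₁, mem_tightSet]; simp
    · rw [ht₂, mem_tightSet]; simp
    · have h := Finset.ext_iff.1 heq p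
      simp only [Finset.mem_sdiff, Finset.mem_filter, not_and, not_lt] at h
      have e₁ : ∀ hp : p ∈ B₁, (r B₁ p ≤ 0 ↔ r B₁ p < 0) := fun hp =>
        ⟨fun h => lt_of_le_of_ne h ((hr B₁ hB₁).2 p hp), le_of_lt⟩
      have e₂ : ∀ hp : p ∈ B₂, (r B₂ p ≤ 0 ↔ r B₂ p < 0) := fun hp =>
        ⟨fun h => lt_of_le_of_ne h ((hr B₂ hB₂).2 p hp), le_of_lt⟩
      simp only [Pi.neg_apply, neg_pos]
      tauto
  · intro T hT
    obtain ⟨y, hy, hyT, hspan⟩ := hface T hT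
    obtain ⟨z, hz, hyz, hzspan⟩ := exists_spanning_tight v b Finset.univ y fun p _ => hy p
    refine ⟨tightSet v b Finset.univ z, (hmem _).2 ⟨z, fun p => hz p (Finset.mem_univ p), rfl, ?_⟩,
      fun p hp => ?_⟩
    · rw [eq_top_iff, ← hv, Submodule.span_le]
      rintro _ ⟨p, rfl⟩
      exact hzspan p (Finset.mem_univ p)
    · refine Submodule.span_mono (image_mono ?_) (hspan p hp)
      exact_mod_cast Finset.subset_inter hyz hyT

end LinearAlgebra

/-! ### Counting bases by their halves -/

section Counting

variable {ι : Type*} [Fintype ι] [DecidableEq ι]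

/-- Bases of size `2 (j + 1)`, all meeting `O`, each determined by either of its two halves. One
half has at most `j` elements, or both have `j + 1` elements and one of them meets `O`. -/
theorem card_bases_le (j : ℕ) (𝓑 : Finset (Finset ι)) (pos : Finset ι → Finset ι)
    (h𝓑 : ∀ B ∈ 𝓑, B.card = 2 * (j + 1) ∧ pos B ⊆ B)
    (hinj₁ : InjOn pos 𝓑) (hinj₂ : InjOn (fun B => B \ pos B) 𝓑)
    (O : Finset ι) (hO : O.Nonempty) (hmeet : ∀ B ∈ 𝓑, ∃ q ∈ B, q ∈ O) :
    𝓑.card ≤ 2 * ((j + 2) * (O.card * Fintype.card ι ^ j)) := by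
  classical
  set N := Fintype.card ι with hN
  have hN1 : 1 ≤ N := Fintype.card_pos_iff.2 ⟨hO.choose⟩
  let small : Finset (Finset ι) :=
    (Finset.range (j + 1)).biUnion fun i => Finset.powersetCard i Finset.univ
  let meeting : Finset (Finset ι) :=
    (O ×ˢ Finset.powersetCard j Finset.univ).image fun x => insert x.1 x.2
  have hsmall : small.card ≤ (j + 1) * N ^ j := by
    calc small.card ≤ ∑ i ∈ Finset.range (j + 1), (Finset.powersetCard i Finset.univ).card :=
          Finset.card_biUnion_le
      _ ≤ ∑ i ∈ Finset.range (j + 1), N ^ j := by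
          refine Finset.sum_le_sum fun i hi => ?_
          rw [Finset.card_powersetCard, Finset.card_univ]
          exact (Nat.choose_le_pow _ _).trans
            (Nat.pow_le_pow_right hN1 (by simpa [Nat.lt_succ_iff] using hi))
      _ = (j + 1) * N ^ j := by simp
  have hmeeting : meeting.card ≤ O.card * N ^ j := by
    refine Finset.card_image_le.trans ?_
    rw [Finset.card_product, Finset.card_powersetCard, Finset.card_univ]
    exact Nat.mul_le_mul_left _ (Nat.choose_le_pow _ _)
  have hsig : (small ∪ meeting).card ≤ (j + 2) * (O.card * N ^ j) := by
    have h1 := Finset.card_union_le small meeting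
    have h2 : 1 * N ^ j ≤ O.card * N ^ j := Nat.mul_le_mul_right _ hO.card_pos
    have h3 : (j + 1) * (1 * N ^ j) ≤ (j + 1) * (O.card * N ^ j) := Nat.mul_le_mul_left _ h2
    rw [one_mul] at h3
    have h4 : (j + 2) * (O.card * N ^ j) = (j + 1) * (O.card * N ^ j) + O.card * N ^ j := by ring
    omega
  have hmem_small : ∀ A : Finset ι, A.card ≤ j → A ∈ small ∪ meeting := by
    intro A hA
    refine Finset.mem_union_left _ (Finset.mem_biUnion.2 ⟨A.card, ?_, ?_⟩)
    · simpa [Nat.lt_succ_iff] using hA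
    · simp [Finset.mem_powersetCard]
  have hmem_meeting : ∀ A : Finset ι, A.card = j + 1 → ∀ q ∈ A, q ∈ O → A ∈ small ∪ meeting := by
    intro A hA q hq hqO
    refine Finset.mem_union_right _ (Finset.mem_image.2 ⟨(q, A.erase q), ?_, ?_⟩)
    · simp [Finset.mem_powersetCard, hqO, Finset.card_erase_of_mem hq, hA]
    · exact Finset.insert_erase hq
  have hcover : 𝓑 ⊆ (𝓑.filter fun B => pos B ∈ small ∪ meeting) ∪
      (𝓑.filter fun B => B \ pos B ∈ small ∪ meeting) := by
    intro B hB
    obtain ⟨hcard, hsub⟩ := h𝓑 B hB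
    have hsum := Finset.card_sdiff_add_card_eq_card hsub
    obtain ⟨q, hqB, hqO⟩ := hmeet B hB
    rw [Finset.mem_union, Finset.mem_filter, Finset.mem_filter]
    rcases Nat.lt_or_ge (pos B).card (j + 1) with h | h
    · exact Or.inl ⟨hB, hmem_small _ (by omega)⟩
    rcases Nat.lt_or_ge (B \ pos B).card (j + 1) with h' | h'
    · exact Or.inr ⟨hB, hmem_small _ (by omega)⟩
    by_cases hq : q ∈ pos B
    · exact Or.inl ⟨hB, hmem_meeting _ (by omega) q hq hqO⟩
    · exact Or.inr ⟨hB, hmem_meeting _ (by omega) q (Finset.mem_sdiff.2 ⟨hqB, hq⟩) hqO⟩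
  have hc₁ : (𝓑.filter fun B => pos B ∈ small ∪ meeting).card ≤ (small ∪ meeting).card :=
    Finset.card_le_card_of_injOn pos (fun B hB => (Finset.mem_filter.1 hB).2)
      (hinj₁.mono fun B hB => (Finset.mem_filter.1 hB).1)
  have hc₂ : (𝓑.filter fun B => B \ pos B ∈ small ∪ meeting).card ≤ (small ∪ meeting).card :=
    Finset.card_le_card_of_injOn (fun B => B \ pos B) (fun B hB => (Finset.mem_filter.1 hB).2)
      (hinj₂.mono fun B hB => (Finset.mem_filter.1 hB).1)
  have := (Finset.card_le_card hcover).trans (Finset.card_union_le _ _)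
  omega

end Counting

/-! ### Counting face sets of a point configuration -/

section FaceSets

variable {V : Type*} [AddCommGroup V] [Module ℝ V] {ι : Type*}

/-- `T` is the set of indices of those points `x p` that lie on a face of their convex hull, a
face being cut out by a linear functional `l` with maximum `M`. The whole index set and the empty
set are allowed. -/
def IsFaceSet (x : ι → V) (T : Finset ι) : Prop :=
  ∃ (l : V →ₗ[ℝ] ℝ) (M : ℝ), ∀ p, l (x p) ≤ M ∧ (p ∈ T ↔ l (x p) = M)

/-- Around the centroid `e` of the points, a proper face becomes a face of the polar. -/
theorem IsFaceSet.isPolarFace [Fintype ι] {x : ι → V} {T : Finset ι} (hT : IsFaceSet x T)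
    (hne : T ≠ Finset.univ) :
    IsPolarFace (fun p => x p - (Fintype.card ι : ℝ)⁻¹ • ∑ q, x q) T := by
  obtain ⟨l, M, hl⟩ := hT
  set e := (Fintype.card ι : ℝ)⁻¹ • ∑ q, x q with he
  obtain ⟨p₀, hp₀⟩ : ∃ p, p ∉ T := by
    by_contra! h
    exact hne (Finset.eq_univ_iff_forall.2 h)
  have hN : (0 : ℝ) < Fintype.card ι := by
    exact_mod_cast Fintype.card_pos_iff.2 ⟨p₀⟩
  have hsum : ∑ q, l (x q) < ∑ _q : ι, M :=
    Finset.sum_lt_sum (fun q _ => (hl q).1)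
      ⟨p₀, Finset.mem_univ _, lt_of_le_of_ne (hl p₀).1 fun h => hp₀ ((hl p₀).2.2 h)⟩
  have hlt : l e < M := by
    rw [he, map_smul, map_sum, smul_eq_mul, inv_mul_lt_iff₀ hN]
    simpa using hsum
  have hpos : 0 < M - l e := sub_pos.2 hlt
  refine ⟨(M - l e)⁻¹ • l, fun p => ?_, fun p => ?_⟩
  · simp only [LinearMap.smul_apply, map_sub, smul_eq_mul]
    rw [← mul_sub, inv_mul_le_iff₀ hpos]
    linarith [(hl p).1]
  · simp only [LinearMap.smul_apply, map_sub, smul_eq_mul]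
    rw [(hl p).2, ← mul_sub, inv_mul_eq_iff_eq_mul₀ hpos.ne']
    constructor <;> intro h <;> linarith

/-- The number of proper faces having a point off the hyperplane `h = t₀`. -/
theorem card_proper_faces_le [Fintype ι] [FiniteDimensional ℝ V] (j : ℕ)
    (hdim : Module.finrank ℝ V = 2 * (j + 1)) (x : ι → V) (hx : vectorSpan ℝ (range x) = ⊤)
    (h : V →ₗ[ℝ] ℝ) (t₀ : ℝ) (O : Finset ι) (hO : ∀ p, p ∈ O ↔ h (x p) ≠ t₀)
    (hOne : O.Nonempty) (𝓕 : Finset (Finset ι))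
    (h𝓕 : ∀ T ∈ 𝓕, IsFaceSet x T ∧ T ≠ Finset.univ ∧ ∃ p ∈ T, p ∈ O) :
    𝓕.card ≤ 2 ^ (2 * (j + 1)) * (2 * ((j + 2) * (O.card * Fintype.card ι ^ j))) := by
  classical
  set e := (Fintype.card ι : ℝ)⁻¹ • ∑ q, x q with he
  set v : ι → V := fun p => x p - e with hv
  have hvspan : Submodule.span ℝ (range v) = ⊤ := by
    rw [eq_top_iff, ← hx, vectorSpan_def, Submodule.span_le]
    rintro _ ⟨_, ⟨p, rfl⟩, _, ⟨q, rfl⟩, rfl⟩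
    have : x p -ᵥ x q = v p - v q := by simp [hv]
    simp only [this]
    exact Submodule.sub_mem _ (Submodule.subset_span ⟨p, rfl⟩) (Submodule.subset_span ⟨q, rfl⟩)
  obtain ⟨𝓑, pos, h𝓑, hinj₁, hinj₂, hface⟩ := exists_bases v hvspan
  have hpolar : ∀ T ∈ 𝓕, IsPolarFace v T := fun T hT =>
    (h𝓕 T hT).1.isPolarFace (h𝓕 T hT).2.1
  have hβ : ∀ T : Finset ι, ∃ B : Finset ι, T ∈ 𝓕 → B ∈ 𝓑 ∧
      ∀ p ∈ T, v p ∈ Submodule.span ℝ (v '' ((B ∩ T : Finset ι) : Set ι)) := by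
    intro T
    by_cases hT : T ∈ 𝓕
    · obtain ⟨B, hB⟩ := hface T (hpolar T hT)
      exact ⟨B, fun _ => hB⟩
    · exact ⟨∅, fun h => absurd h hT⟩
  choose β hβ using hβ
  -- A functional vanishing on the spanning part of a face vanishes on the whole face.
  have hvanish : ∀ T ∈ 𝓕, ∀ f : V →ₗ[ℝ] ℝ, (∀ q ∈ β T ∩ T, f (v q) = 0) →
      ∀ p ∈ T, f (v p) = 0 := by
    intro T hT f hf p hp
    have hle : Submodule.span ℝ (v '' ((β T ∩ T : Finset ι) : Set ι)) ≤ f.ker := by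
      rw [Submodule.span_le]
      rintro _ ⟨q, hq, rfl⟩
      exact hf q hq
    exact hle ((hβ T hT).2 p hp)
  let 𝓑' := 𝓑.filter fun B => ∃ q ∈ B, q ∈ O
  have hcard𝓑 : 𝓑'.card ≤ 2 * ((j + 2) * (O.card * Fintype.card ι ^ j)) := by
    refine card_bases_le j 𝓑' pos (fun B hB => ?_) (hinj₁.mono ?_) (hinj₂.mono ?_) O hOne
      fun B hB => (Finset.mem_filter.1 hB).2
    · rw [← hdim]
      exact h𝓑 B (Finset.mem_filter.1 hB).1
    · exact fun B hB => (Finset.mem_filter.1 hB).1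
    · exact fun B hB => (Finset.mem_filter.1 hB).1
  have hmaps : ∀ T ∈ 𝓕, β T ∩ T ∈ 𝓑'.biUnion Finset.powerset := by
    intro T hT
    refine Finset.mem_biUnion.2 ⟨β T, Finset.mem_filter.2 ⟨(hβ T hT).1, ?_⟩,
      Finset.mem_powerset.2 Finset.inter_subset_left⟩
    by_contra! hcon
    obtain ⟨y, -, hy⟩ := hpolar T hT
    obtain ⟨p, hp, hpO⟩ := (h𝓕 T hT).2.2
    -- On the hyperplane `y = 1`, the function `h - t₀` is the linear functional below.
    have := hvanish T hT (h - (t₀ - h e) • y) (fun q hq => by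
      have h1 : h (x q) = t₀ := by
        by_contra hne
        exact hcon q (Finset.mem_inter.1 hq).1 ((hO q).2 hne)
      have h2 := (hy q).1 (Finset.mem_inter.1 hq).2
      have h3 : h (v q) = t₀ - h e := by simp [hv, h1]
      simp [h2, h3]) p hp
    have h2 := (hy p).1 hp
    have h3 : h (v p) = h (x p) - h e := by simp [hv]
    simp only [LinearMap.sub_apply, LinearMap.smul_apply, h2, h3, smul_eq_mul] at this
    exact (hO p).1 hpO (by linarith)
  have hsub : ∀ T₁ ∈ 𝓕, ∀ T₂ ∈ 𝓕, β T₁ ∩ T₁ = β T₂ ∩ T₂ → T₁ ⊆ T₂ := by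
    intro T₁ hT₁ T₂ hT₂ heq p hp
    obtain ⟨y₁, -, hy₁⟩ := hpolar T₁ hT₁
    obtain ⟨y₂, -, hy₂⟩ := hpolar T₂ hT₂
    have := hvanish T₁ hT₁ (y₁ - y₂) (fun q hq => by
      have h1 := (hy₁ q).1 (Finset.mem_inter.1 hq).2
      rw [heq] at hq
      have h2 := (hy₂ q).1 (Finset.mem_inter.1 hq).2
      simp [h1, h2]) p hp
    rw [hy₂, ← (hy₁ p).1 hp]
    rw [LinearMap.sub_apply] at this
    linarith
  calc 𝓕.card ≤ (𝓑'.biUnion Finset.powerset).card :=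
        Finset.card_le_card_of_injOn (fun T => β T ∩ T) hmaps fun T₁ hT₁ T₂ hT₂ heq =>
          Finset.Subset.antisymm (hsub T₁ hT₁ T₂ hT₂ heq) (hsub T₂ hT₂ T₁ hT₁ heq.symm)
    _ ≤ ∑ B ∈ 𝓑', B.powerset.card := Finset.card_biUnion_le
    _ = ∑ B ∈ 𝓑', 2 ^ (2 * (j + 1)) := by
        refine Finset.sum_congr rfl fun B hB => ?_
        rw [Finset.card_powerset, (h𝓑 B (Finset.mem_filter.1 hB).1).1, hdim]
    _ = 2 ^ (2 * (j + 1)) * 𝓑'.card := by rw [Finset.sum_const, smul_eq_mul, mul_comm]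
    _ ≤ _ := Nat.mul_le_mul_left _ hcard𝓑

/-- Rotating a supporting hyperplane about its intersection with `h = t₀`: a face inside `h = t₀`,
other than the full section by that hyperplane, is the section of a proper face leaving it. -/
theorem IsFaceSet.exists_rotate [Fintype ι] {x : ι → V} {T : Finset ι} (hT : IsFaceSet x T)
    (h : V →ₗ[ℝ] ℝ) (t₀ : ℝ) (hin : ∀ p ∈ T, h (x p) = t₀) (hout : ∃ p, h (x p) ≠ t₀)
    (hne : ∃ p, h (x p) = t₀ ∧ p ∉ T) :
    ∃ T', IsFaceSet x T' ∧ T' ≠ Finset.univ ∧ (∃ p ∈ T', h (x p) ≠ t₀) ∧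
      ∀ p, p ∈ T ↔ p ∈ T' ∧ h (x p) = t₀ := by
  classical
  wlog hpos : ∃ p, t₀ < h (x p) generalizing h t₀
  · obtain ⟨p, hp⟩ := hout
    have hlt : h (x p) < t₀ := lt_of_le_of_ne (not_lt.1 fun hlt => hpos ⟨p, hlt⟩) hp
    obtain ⟨q, hq⟩ := hne
    have := this (-h) (-t₀) (by simpa using hin) ⟨p, by simpa using hp⟩ ⟨q, by simpa using hq⟩
      ⟨p, by simpa using hlt⟩
    simpa using this
  obtain ⟨l, M, hl⟩ := hT
  obtain ⟨p₁, hp₁⟩ := hpos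
  obtain ⟨q, hq, hqmin⟩ := Finset.exists_min_image (Finset.univ.filter fun p => t₀ < h (x p))
    (fun p => (M - l (x p)) / (h (x p) - t₀)) ⟨p₁, by simpa using hp₁⟩
  have hq : 0 < h (x q) - t₀ := sub_pos.2 (by simpa using hq)
  set s := (M - l (x q)) / (h (x q) - t₀) with hs
  have hs0 : 0 ≤ s := div_nonneg (by linarith [(hl q).1]) hq.le
  have hsq : s * (h (x q) - t₀) = M - l (x q) := by rw [hs]; field_simp
  have hval : ∀ p, (l + s • h) (x p) = l (x p) + s * h (x p) := fun p => by simp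
  have hqT : (l + s • h) (x q) = M + s * t₀ := by rw [hval]; linarith
  obtain ⟨p₂, hp₂, hp₂T⟩ := hne
  have hp₂T' : (l + s • h) (x p₂) ≠ M + s * t₀ := by
    rw [hval, hp₂]
    intro heq
    exact hp₂T ((hl p₂).2.2 (by linarith))
  refine ⟨Finset.univ.filter fun p => (l + s • h) (x p) = M + s * t₀,
    ⟨l + s • h, M + s * t₀, fun p => ⟨?_, by simp⟩⟩, fun heq => ?_, ⟨q, ?_, ?_⟩, fun p => ?_⟩
  · rw [hval]
    by_cases hp : t₀ < h (x p)
    · have := hqmin p (by simpa using hp)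
      rw [le_div_iff₀ (sub_pos.2 hp)] at this
      linarith
    · have := mul_nonneg hs0 (sub_nonneg.2 (not_lt.1 hp))
      linarith [(hl p).1]
  · exact hp₂T' (by simpa using (Finset.eq_univ_iff_forall.1 heq) p₂)
  · simpa using hqT
  · exact (sub_pos.1 hq).ne'
  · rw [Finset.mem_filter, hval, (hl p).2]
    constructor
    · intro hp
      have := hin p ((hl p).2.2 hp)
      exact ⟨⟨Finset.mem_univ _, by rw [hp, this]⟩, this⟩
    · rintro ⟨⟨-, h1⟩, h2⟩
      rw [h2] at h1
      linarith

/-- The number of all faces, in terms of the number `O.card` of points off a hyperplane. -/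
theorem card_faces_le [Fintype ι] [FiniteDimensional ℝ V] (j : ℕ)
    (hdim : Module.finrank ℝ V = 2 * (j + 1)) (x : ι → V) (hx : vectorSpan ℝ (range x) = ⊤)
    (h : V →ₗ[ℝ] ℝ) (t₀ : ℝ) (O : Finset ι) (hO : ∀ p, p ∈ O ↔ h (x p) ≠ t₀)
    (hOne : O.Nonempty) :
    {T : Finset ι | IsFaceSet x T}.ncard ≤
      4 * (2 ^ (2 * (j + 1)) * (2 * ((j + 2) * (O.card * Fintype.card ι ^ j)))) := by
  classical
  set X := 2 ^ (2 * (j + 1)) * (2 * ((j + 2) * (O.card * Fintype.card ι ^ j))) with hX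
  have hX1 : 1 ≤ X := by
    have : Nonempty ι := ⟨hOne.choose⟩
    have h1 := hOne.card_pos
    have h2 : 0 < Fintype.card ι := Fintype.card_pos
    rw [hX]
    exact Nat.succ_le_of_lt (by positivity)
  let all : Finset (Finset ι) := Finset.univ.filter fun T => IsFaceSet x T
  let leaving := all.filter fun T => T ≠ Finset.univ ∧ ∃ p ∈ T, p ∈ O
  let inside := all.filter fun T => (∀ p ∈ T, p ∉ O) ∧ ∃ p, p ∉ O ∧ p ∉ T
  have hleaving : leaving.card ≤ X := by
    refine card_proper_faces_le j hdim x hx h t₀ O hO hOne leaving fun T hT => ?_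
    simpa [leaving, all] using hT
  have hinside : inside.card ≤ leaving.card := by
    have hrot : ∀ T : Finset ι, ∃ T', T ∈ inside → T' ∈ leaving ∧
        ∀ p, p ∈ T ↔ p ∈ T' ∧ h (x p) = t₀ := by
      intro T
      by_cases hT : T ∈ inside
      swap
      · exact ⟨∅, fun h => absurd h hT⟩
      simp only [inside, all, Finset.mem_filter, Finset.mem_univ, true_and, hO, not_not] at hT
      obtain ⟨T', h1, h2, h3, h4⟩ := hT.1.exists_rotate h t₀ hT.2.1
        ⟨hOne.choose, (hO _).1 hOne.choose_spec⟩ hT.2.2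
      refine ⟨T', fun _ => ⟨?_, h4⟩⟩
      simp only [leaving, all, Finset.mem_filter, Finset.mem_univ, true_and, hO]
      exact ⟨h1, h2, h3⟩
    choose ρ hρ using hrot
    refine Finset.card_le_card_of_injOn ρ (fun T hT => (hρ T hT).1) fun T₁ hT₁ T₂ hT₂ heq => ?_
    ext p
    rw [(hρ T₁ hT₁).2, (hρ T₂ hT₂).2, heq]
  have hcover : all ⊆ {Finset.univ, Oᶜ} ∪ (leaving ∪ inside) := by
    intro T hT
    simp only [Finset.mem_union, Finset.mem_insert, Finset.mem_singleton, leaving, inside,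
      Finset.mem_filter, hT, true_and]
    by_contra! hcon
    obtain ⟨⟨h1, h2⟩, h3, h4⟩ := hcon
    have h5 := h3 h1
    refine h2 (Finset.ext fun p => ?_)
    rw [Finset.mem_compl]
    exact ⟨h5 p, h4 h5 p⟩
  have hall : {T : Finset ι | IsFaceSet x T}.ncard = all.card := by
    rw [← Set.ncard_coe_finset]
    congr 1
    ext T
    simp [all]
  have h1 := Finset.card_le_card hcover
  have h2 := Finset.card_union_le {Finset.univ, Oᶜ} (leaving ∪ inside)
  have h3 := Finset.card_union_le leaving inside
  have h4 : ({Finset.univ, Oᶜ} : Finset (Finset ι)).card ≤ 2 := Finset.card_le_two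
  rw [hall]
  omega

end FaceSets

/-! ### Exposed faces of polytopes and the final estimate -/

section Euclidean

variable {N : ℕ}

theorem subset_convexHull_inter_of_isExposed {S F : Set (EuclideanSpace ℝ (Fin N))}
    (hS : S.Finite) (hF : IsExposed ℝ (convexHull ℝ S) F) : F ⊆ convexHull ℝ (S ∩ F) := by
  have hcomp : IsCompact F := hF.isCompact (hS.isCompact_convexHull ℝ)
  have hconv : Convex ℝ F := hF.convex (convex_convexHull ℝ S)
  have hext : F.extremePoints ℝ ⊆ S ∩ F := fun x hx =>
    ⟨extremePoints_convexHull_subset (hF.isExtreme.extremePoints_subset_extremePoints hx),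
      extremePoints_subset hx⟩
  have hcl : IsClosed (convexHull ℝ (S ∩ F)) :=
    ((hS.subset inter_subset_left).isCompact_convexHull ℝ).isClosed
  exact (closure_convexHull_extremePoints hcomp hconv).symm.subset.trans
    (closure_minimal (convexHull_mono hext) hcl)

/-- A face is determined by the points of `S` it contains. -/
theorem totalFaces_le_ncard_faceSets {S : Set (EuclideanSpace ℝ (Fin N))} (hS : S.Finite) :
    totalFaces (convexHull ℝ S) ≤
      {T : Finset S | IsFaceSet (fun p : S => (p : EuclideanSpace ℝ (Fin N))) T}.ncard := by
  classical
  have : Fintype S := hS.fintype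
  refine Set.ncard_le_ncard_of_injOn
    (fun F => Finset.univ.filter fun p : S => (p : EuclideanSpace ℝ (Fin N)) ∈ F) ?_ ?_
    (Set.toFinite _)
  · rintro F ⟨hF, hne⟩
    obtain ⟨l, hl⟩ := hF hne
    obtain ⟨x₀, hx₀⟩ := hne
    have hx₀' := hx₀
    rw [hl] at hx₀'
    refine ⟨l.toLinearMap, l x₀, fun p => ?_⟩
    have hpC : (p : EuclideanSpace ℝ (Fin N)) ∈ convexHull ℝ S := subset_convexHull ℝ S p.2
    have hle := hx₀'.2 p hpC
    refine ⟨hle, ?_⟩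
    simp only [Finset.mem_filter, Finset.mem_univ, true_and, ContinuousLinearMap.coe_coe]
    rw [hl]
    exact ⟨fun h => le_antisymm hle (h.2 x₀ hx₀'.1), fun h => ⟨hpC, fun y hy => h ▸ hx₀'.2 y hy⟩⟩
  · have key : ∀ F₁ F₂ : Set (EuclideanSpace ℝ (Fin N)), IsExposed ℝ (convexHull ℝ S) F₁ →
        IsExposed ℝ (convexHull ℝ S) F₂ →
        (∀ p : S, (p : EuclideanSpace ℝ (Fin N)) ∈ F₁ ↔ (p : EuclideanSpace ℝ (Fin N)) ∈ F₂) →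
        F₁ ⊆ F₂ := by
      intro F₁ F₂ h₁ h₂ heq
      refine (subset_convexHull_inter_of_isExposed hS h₁).trans
        (convexHull_min ?_ (h₂.convex (convex_convexHull ℝ S)))
      exact fun x hx => (heq ⟨x, hx.1⟩).1 hx.2
    rintro F₁ ⟨h₁, -⟩ F₂ ⟨h₂, -⟩ heq
    have heq' : ∀ p : S, (p : EuclideanSpace ℝ (Fin N)) ∈ F₁ ↔
        (p : EuclideanSpace ℝ (Fin N)) ∈ F₂ := fun p => by
      simpa using Finset.ext_iff.1 heq p
    exact Subset.antisymm (key F₁ F₂ h₁ h₂ heq') (key F₂ F₁ h₂ h₁ fun p => (heq' p).symm)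

theorem convexHull_extremePoints_convexHull {S : Set (EuclideanSpace ℝ (Fin N))}
    (hS : S.Finite) : convexHull ℝ ((convexHull ℝ S).extremePoints ℝ) = convexHull ℝ S := by
  have hcl : IsClosed (convexHull ℝ ((convexHull ℝ S).extremePoints ℝ)) :=
    ((hS.subset extremePoints_convexHull_subset).isCompact_convexHull ℝ).isClosed
  rw [← hcl.closure_eq]
  exact closure_convexHull_extremePoints (hS.isCompact_convexHull ℝ) (convex_convexHull ℝ S)

theorem vectorSpan_convexHull (S : Set (EuclideanSpace ℝ (Fin N))) :
    vectorSpan ℝ (convexHull ℝ S) = vectorSpan ℝ S := by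
  rw [← direction_affineSpan, affineSpan_convexHull, direction_affineSpan]

end Euclidean

theorem stmt0 (d m : ℕ) (hd : 3 ≤ d) (hodd : Odd d) (hm : 2 ≤ m) :
    ∃ c : ℝ, 0 < c ∧
      ∀ (u : EuclideanSpace ℝ (Fin (d + 1))) (t : Fin m → ℝ)
        (P : Fin m → Set (EuclideanSpace ℝ (Fin (d + 1)))),
        ‖u‖ = 1 → StrictMono t →
        (∀ i, (P i).Finite) →
        (∀ i, P i ⊆ {x | ⟪x, u⟫ = t i}) →
        (∀ i, adim (convexHull ℝ (P i)) = d) →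
        (totalFaces (convexHull ℝ (⋃ i, P i)) : ℝ) ≤
          c * ∑ i : Fin m, ∑ j : Fin m,
            if i ≠ j then
              (((convexHull ℝ (P i)).extremePoints ℝ).ncard : ℝ) *
                (((convexHull ℝ (P j)).extremePoints ℝ).ncard : ℝ) ^ (d / 2)
            else 0 := by
  classical
  obtain ⟨k, hk⟩ := hodd
  have hk2 : d / 2 = k := by omega
  rw [hk2]
  refine ⟨4 * (2 ^ (2 * (k + 1)) * (2 * ((k + 2) * m ^ k))), by positivity, ?_⟩
  intro u t P hu ht hfin hplane hadim
  set Q : Fin m → Set (EuclideanSpace ℝ (Fin (d + 1))) :=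
    fun i => (convexHull ℝ (P i)).extremePoints ℝ with hQ
  have hQP : ∀ i, Q i ⊆ P i := fun i => extremePoints_convexHull_subset
  have hQfin : ∀ i, (Q i).Finite := fun i => (hfin i).subset (hQP i)
  have hQhull : ∀ i, convexHull ℝ (Q i) = convexHull ℝ (P i) := fun i =>
    convexHull_extremePoints_convexHull (hfin i)
  set S : Set (EuclideanSpace ℝ (Fin (d + 1))) := ⋃ i, Q i with hSdef
  have hS : S.Finite := Set.finite_iUnion hQfin
  have hSP : convexHull ℝ (⋃ i, P i) = convexHull ℝ S := by
    refine Subset.antisymm (convexHull_min ?_ (convex_convexHull ℝ S))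
      (convexHull_mono (iUnion_mono hQP))
    refine iUnion_subset fun i => (subset_convexHull ℝ (P i)).trans ?_
    rw [← hQhull i]
    exact convexHull_mono (subset_iUnion Q i)
  have hQdim : ∀ i, Module.finrank ℝ (vectorSpan ℝ (Q i)) = d := by
    intro i
    rw [← vectorSpan_convexHull, hQhull i]
    exact hadim i
  have hQne : ∀ i, (Q i).Nonempty := by
    intro i
    by_contra hne
    rw [not_nonempty_iff_eq_empty] at hne
    have := hQdim i
    rw [hne, vectorSpan_empty, finrank_bot] at this
    omega
  let h : EuclideanSpace ℝ (Fin (d + 1)) →ₗ[ℝ] ℝ := innerₗ _ u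
  have hh : ∀ i, ∀ x ∈ Q i, h x = t i := by
    intro i x hx
    have : ⟪x, u⟫ = t i := hplane i (hQP i hx)
    rw [← this]
    exact real_inner_comm x u
  -- The points of one hyperplane span its direction; a point of another hyperplane adds `1`.
  have hspanS : vectorSpan ℝ S = ⊤ := by
    let i₀ : Fin m := ⟨0, by omega⟩
    let i₁ : Fin m := ⟨1, by omega⟩
    obtain ⟨p, hp⟩ := hQne i₀
    obtain ⟨q, hq⟩ := hQne i₁
    have hle : vectorSpan ℝ (Q i₀) ≤ vectorSpan ℝ S := vectorSpan_mono ℝ (subset_iUnion Q i₀)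
    have hker : vectorSpan ℝ (Q i₀) ≤ h.ker := by
      rw [vectorSpan_def, Submodule.span_le]
      rintro _ ⟨x, hx, y, hy, rfl⟩
      simp [hh i₀ x hx, hh i₀ y hy]
    have hqp : q -ᵥ p ∈ vectorSpan ℝ S :=
      vsub_mem_vectorSpan ℝ (mem_iUnion.2 ⟨i₁, hq⟩) (mem_iUnion.2 ⟨i₀, hp⟩)
    have hlt : vectorSpan ℝ (Q i₀) < vectorSpan ℝ S := by
      refine lt_of_le_of_ne hle fun heq => ?_
      rw [← heq] at hqp
      have h0 : h (q -ᵥ p) = 0 := hker hqp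
      rw [vsub_eq_sub, map_sub, hh i₁ q hq, hh i₀ p hp] at h0
      have : t i₀ < t i₁ := ht (by simp [i₀, i₁, Fin.lt_def])
      linarith
    have hlt' := Submodule.finrank_lt_finrank_of_lt hlt
    rw [hQdim i₀] at hlt'
    refine Submodule.eq_top_of_finrank_eq ?_
    have := Submodule.finrank_le (vectorSpan ℝ S)
    rw [finrank_euclideanSpace_fin] at this ⊢
    omega
  -- The hyperplane carrying the most vertices plays the distinguished role.
  obtain ⟨i₀, -, hmax⟩ := Finset.exists_max_image (Finset.univ : Finset (Fin m))
    (fun i => (Q i).ncard) ⟨⟨0, by omega⟩, Finset.mem_univ _⟩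
  have : Fintype S := hS.fintype
  let O : Finset S := Finset.univ.filter fun p => h p ≠ t i₀
  have hOne : O.Nonempty := by
    have : Nontrivial (Fin m) := Fin.nontrivial_iff_two_le.2 hm
    obtain ⟨j, hj⟩ := exists_ne i₀
    obtain ⟨q, hq⟩ := hQne j
    refine ⟨⟨q, mem_iUnion.2 ⟨j, hq⟩⟩, ?_⟩
    simp only [O, Finset.mem_filter, Finset.mem_univ, true_and, hh j q hq]
    exact ht.injective.ne hj
  have hbound := card_faces_le k (by rw [finrank_euclideanSpace_fin]; omega)
    (fun p : S => (p : EuclideanSpace ℝ (Fin (d + 1)))) (by rw [Subtype.range_coe]; exact hspanS)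
    h (t i₀) O (by simp [O]) hOne
  have hfaces := (totalFaces_le_ncard_faceSets hS).trans hbound
  rw [← hSP] at hfaces
  have hcardS : Fintype.card S ≤ m * (Q i₀).ncard := by
    rw [← Nat.card_eq_fintype_card, Nat.card_coe_set_eq]
    refine (Set.ncard_iUnion_le_of_fintype Q).trans ?_
    refine (Finset.sum_le_sum fun i _ => hmax i (Finset.mem_univ i)).trans ?_
    simp
  have hcardO : O.card ≤ ∑ i ∈ Finset.univ.erase i₀, (Q i).ncard := by
    have hsub : O.image Subtype.val ⊆
        (Finset.univ.erase i₀).biUnion fun i => (hQfin i).toFinset := by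
      intro x hx
      obtain ⟨⟨y, hy⟩, hyO, rfl⟩ := Finset.mem_image.1 hx
      obtain ⟨i, hi⟩ := mem_iUnion.1 hy
      refine Finset.mem_biUnion.2 ⟨i, Finset.mem_erase.2 ⟨?_, Finset.mem_univ _⟩, by simpa using hi⟩
      rintro rfl
      exact (Finset.mem_filter.1 hyO).2 (hh i y hi)
    rw [← Finset.card_image_of_injective O Subtype.val_injective]
    refine (Finset.card_le_card hsub).trans (Finset.card_biUnion_le.trans ?_)
    exact Finset.sum_le_sum fun i _ => (Set.ncard_eq_toFinset_card _ (hQfin i)).ge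
  have hmain : (O.card : ℝ) * (Fintype.card S : ℝ) ^ k ≤
      m ^ k * ∑ i : Fin m, ∑ j : Fin m,
        if i ≠ j then ((Q i).ncard : ℝ) * ((Q j).ncard : ℝ) ^ k else 0 := by
    calc (O.card : ℝ) * (Fintype.card S : ℝ) ^ k
        ≤ (∑ i ∈ Finset.univ.erase i₀, ((Q i).ncard : ℝ)) * (m * (Q i₀).ncard) ^ k := by
          gcongr
          · exact_mod_cast hcardO
          · exact_mod_cast hcardS
      _ = m ^ k * ∑ i ∈ Finset.univ.erase i₀, ((Q i).ncard : ℝ) * ((Q i₀).ncard : ℝ) ^ k := by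
          rw [← Finset.sum_mul, mul_pow]; ring
      _ ≤ _ := by
          gcongr
          refine (Finset.sum_le_sum fun i hi => ?_).trans
            (Finset.sum_le_sum_of_subset_of_nonneg (Finset.erase_subset i₀ _) fun i _ _ =>
              Finset.sum_nonneg fun j _ => by split_ifs <;> positivity)
          refine le_trans ?_ (Finset.single_le_sum (fun j _ => by split_ifs <;> positivity)
            (Finset.mem_univ i₀))
          rw [if_pos (Finset.ne_of_mem_erase hi)]
  have hfaces' : (totalFaces (convexHull ℝ (⋃ i, P i)) : ℝ) ≤
      4 * (2 ^ (2 * (k + 1)) * (2 * ((k + 2) * ((O.card : ℝ) * (Fintype.card S : ℝ) ^ k)))) := by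
    exact_mod_cast hfaces
  refine hfaces'.trans ?_
  calc _ ≤ 4 * (2 ^ (2 * (k + 1)) * (2 * (((k : ℝ) + 2) * (m ^ k * ∑ i : Fin m, ∑ j : Fin m,
        if i ≠ j then ((Q i).ncard : ℝ) * ((Q j).ncard : ℝ) ^ k else 0)))) := by gcongr
    _ = _ := by ring
end

section
/- Fix an odd integer d ≥ 3 and an integer m ≥ 2. There exist a constant c > 0 and an integer n_0, depending only on d and m, such that for all integers n_1, …, n_m ≥ n_0 there exist m parallel hyperplanes Π_1, …, Π_m in E^{d+1} and finite sets P_i ⊂ Π_i such that each 𝒫_i = conv(P_i) is a d-dimensional polytope with exactly n_i vertices, and the total number of nonempty exposed faces of conv(P_1 ∪ … ∪ P_m) is at least c · Σ_{1 ≤ i ≠ j ≤ m} n_i · n_j^{⌊d/2⌋}. (Corollary 4.3, the lower bound part of Theorem 2.6.) -/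
/-!
Write `d = 2k+1` and let `a`, `b` be indices of a largest and a second largest `n i`. Every
summand is at most `n b * n a ^ k`, so it suffices that the convex hull has a constant fraction of
`n a ^ k * n b` faces coming from the hyperplanes `a` and `b` alone (`exists_dominant`,
`count_bound`).

Coordinates of `E^{2k+2}` are `(v, z, w)` with `v ∈ ℝ^{2k}` and `w` the height. At height `a` lie
points of the moment curve `(t, t², …, t^{2k})` in the coordinates `v`, with `z = 0`; at height `b`
lie points `y` of the parabola `v_{2k} = y²`, `z = y`. For a `k`-set `S` of curve parameters and a
parabola parameter `j`, the functional whose coefficients in `v` are those of the polynomial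
`-∏_{x ∈ S} (X - x)²`, with coefficient `2j` at `z`, equals `const - ∏ (t - x)²` on the curve and
`const - (y - j)²` on the parabola. A suitable coefficient at the height `w` makes the two constants
equal, so the functional exposes a face meeting the curve points exactly in `S` and the parabola
points exactly in `j` (`exists_functional`). Distinct pairs `(S, j)` give distinct faces.

All other points needed (an apex over the curve, side points over the parabola, and the complete
polytopes in the other hyperplanes) are translated far along the coordinate `v_{2k}`. All
functionals above have coefficient `-1` there, so for a large translation these points lie strictly
below the maximum and do not disturb the faces (`construction`).
-/

open Set Pointwise RealInnerProductSpace

/-! ### Convex hulls of finite sets -/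

/-- A bound of a linear functional on a set extends to its convex hull. -/
lemma le_on_convexHull {E : Type*} [NormedAddCommGroup E] [NormedSpace ℝ E]
    {X : Set E} (l : E →L[ℝ] ℝ) {M : ℝ} (h : ∀ x ∈ X, l x ≤ M) :
    ∀ x ∈ convexHull ℝ X, l x ≤ M := by
  intro x hx
  have : convexHull ℝ X ⊆ {x | l x ≤ M} :=
    convexHull_min h (convex_halfSpace_le l.toLinearMap.isLinear M)
  exact this hx

/-- Krein–Milman makes an exposed face the closed convex hull of its extreme points, and these
belong to `X`; so a face is determined by a subset of `X`. -/
lemma finite_faces {N : ℕ} {X : Set (EuclideanSpace ℝ (Fin N))} (hX : X.Finite) :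
    {F : Set (EuclideanSpace ℝ (Fin N)) | IsExposed ℝ (convexHull ℝ X) F ∧ F.Nonempty}.Finite := by
  have hcomp : IsCompact (convexHull ℝ X) := hX.isCompact_convexHull (𝕜 := ℝ)
  refine Set.Finite.of_finite_image (f := fun F => F.extremePoints ℝ)
    (hX.finite_subsets.subset ?_) ?_
  · rintro _ ⟨F, ⟨hF, -⟩, rfl⟩
    exact (hF.isExtreme.extremePoints_subset_extremePoints).trans extremePoints_convexHull_subset
  · rintro F ⟨hF, -⟩ G ⟨hG, -⟩ h
    have key : ∀ F, IsExposed ℝ (convexHull ℝ X) F →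
        closure (convexHull ℝ (F.extremePoints ℝ)) = F := fun F hF =>
      closure_convexHull_extremePoints (hF.isCompact hcomp) (hF.convex (convex_convexHull ℝ X))
    rw [← key F hF, ← key G hG]
    exact congrArg (fun s => closure (convexHull ℝ s)) h

lemma extremePoints_ncard {E ι : Type*} [NormedAddCommGroup E] [NormedSpace ℝ E] [Fintype ι]
    (f : ι → E) (h : ∀ i, ∃ l : E →L[ℝ] ℝ, ∀ j, j ≠ i → l (f j) < l (f i)) :
    ((convexHull ℝ (range f)).extremePoints ℝ).ncard = Fintype.card ι := by
  have hinj : Function.Injective f := by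
    intro i j hij
    by_contra hne
    obtain ⟨l, hl⟩ := h i
    have := hl j (Ne.symm hne)
    rw [hij] at this
    exact lt_irrefl _ this
  have : (convexHull ℝ (range f)).extremePoints ℝ = range f := by
    refine extremePoints_convexHull_subset.antisymm ?_
    rintro _ ⟨i, rfl⟩
    obtain ⟨l, hl⟩ := h i
    have hcomp : IsCompact (convexHull ℝ (range f)) :=
      (Set.finite_range f).isCompact_convexHull (𝕜 := ℝ)
    have hexp : IsExposed ℝ (convexHull ℝ (range f)) (l.toExposed (convexHull ℝ (range f))) :=
      ContinuousLinearMap.toExposed.isExposed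
    have hmem : f i ∈ l.toExposed (convexHull ℝ (range f)) := by
      refine ⟨subset_convexHull ℝ _ ⟨i, rfl⟩, le_on_convexHull l ?_⟩
      rintro _ ⟨j, rfl⟩
      rcases eq_or_ne j i with rfl | hj
      · exact le_rfl
      · exact (hl j hj).le
    -- An extreme point of the face exposed by `l` is some `f j` maximising `l`, hence `f i`.
    obtain ⟨e, he⟩ := (hexp.isCompact hcomp).extremePoints_nonempty (E := E) ⟨_, hmem⟩
    have he' := hexp.isExtreme.extremePoints_subset_extremePoints he
    obtain ⟨j, rfl⟩ := extremePoints_convexHull_subset he'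
    have hle := he.1.2 (f i) hmem.1
    rcases eq_or_ne j i with rfl | hj
    · exact he'
    · exact absurd (hl j hj) (not_lt.2 hle)
  rw [this, ← Set.image_univ, Set.ncard_image_of_injective _ hinj, Set.ncard_univ,
    Nat.card_eq_fintype_card]

/-! ### Coordinates -/

/-- The point of `E^{2k+2}` with first `2k` coordinates `v`, then `z`, then the height `w`. -/
noncomputable def mk {k : ℕ} (v : Fin (2 * k) → ℝ) (z w : ℝ) :
    EuclideanSpace ℝ (Fin (2 * k + 1 + 1)) :=
  WithLp.toLp 2 (Fin.snoc (Fin.snoc v z : Fin (2 * k + 1) → ℝ) w : Fin (2 * k + 1 + 1) → ℝ)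

/-- The linear functional with coefficient vector `mk c s h`. -/
noncomputable def lin {k : ℕ} (c : Fin (2 * k) → ℝ) (s h : ℝ) :
    EuclideanSpace ℝ (Fin (2 * k + 1 + 1)) →L[ℝ] ℝ :=
  innerSL ℝ (mk c s h)

lemma inner_mk {k : ℕ} (c v : Fin (2 * k) → ℝ) (s h z w : ℝ) :
    ⟪mk c s h, mk v z w⟫ = c ⬝ᵥ v + s * z + h * w := by
  simp [mk, PiLp.inner_apply, Fin.sum_univ_castSucc, dotProduct, mul_comm]

lemma lin_mk {k : ℕ} (c v : Fin (2 * k) → ℝ) (s h z w : ℝ) :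
    lin c s h (mk v z w) = c ⬝ᵥ v + s * z + h * w := by
  simp [lin, inner_mk]

lemma exists_mk {k : ℕ} (x : EuclideanSpace ℝ (Fin (2 * k + 1 + 1))) :
    ∃ v z w, x = mk v z w := by
  refine ⟨fun i => x i.castSucc.castSucc, x (Fin.last _).castSucc, x (Fin.last _), ?_⟩
  ext i
  refine Fin.lastCases ?_ (fun i => ?_) i
  · simp [mk]
  · refine Fin.lastCases ?_ (fun i => ?_) i <;> simp [mk]

/-- The unit vector normal to the hyperplanes. -/
noncomputable def nor (k : ℕ) : EuclideanSpace ℝ (Fin (2 * k + 1 + 1)) := mk 0 0 1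

lemma norm_nor (k : ℕ) : ‖nor k‖ = 1 := by
  rw [← sq_eq_sq₀ (norm_nonneg _) zero_le_one, ← real_inner_self_eq_norm_sq, nor, inner_mk]
  simp

/-- A set in a horizontal hyperplane is `(2k+1)`-dimensional as soon as the only linear
functionals constant on it are the multiples of the height. -/
lemma adim_hull {k : ℕ} {X : Set (EuclideanSpace ℝ (Fin (2 * k + 1 + 1)))} {w : ℝ}
    (hX : ∀ x ∈ X, ⟪x, nor k⟫ = w)
    (h : ∀ c s t, (∀ x ∈ X, ∀ y ∈ X, lin c s t x = lin c s t y) → c = 0 ∧ s = 0) :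
    adim (convexHull ℝ X) = 2 * k + 1 := by
  have hv : vectorSpan ℝ (convexHull ℝ X) = vectorSpan ℝ X := by
    rw [← direction_affineSpan, affineSpan_convexHull, direction_affineSpan]
  have horth : (vectorSpan ℝ X)ᗮ = Submodule.span ℝ {nor k} := by
    apply le_antisymm
    · intro y hy
      obtain ⟨c, s, t, rfl⟩ := exists_mk y
      obtain ⟨rfl, rfl⟩ := h c s t (by
        intro x hx x' hx'
        have := (Submodule.mem_orthogonal' _ _).1 hy (x - x') (vsub_mem_vectorSpan ℝ hx hx')
        rw [inner_sub_right, sub_eq_zero] at this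
        exact this)
      rw [Submodule.mem_span_singleton]
      refine ⟨t, ?_⟩
      ext i
      refine Fin.lastCases ?_ (fun i => ?_) i
      · simp [mk, nor]
      · refine Fin.lastCases ?_ (fun i => ?_) i <;> simp [mk, nor]
    · rw [Submodule.span_singleton_le_iff_mem, Submodule.mem_orthogonal]
      intro x hx
      induction hx using Submodule.span_induction with
      | mem x hx =>
        obtain ⟨a, ha, b, hb, rfl⟩ := hx
        simp [inner_sub_left, hX a ha, hX b hb]
      | zero => simp
      | add x y _ _ hx hy => simp [inner_add_left, hx, hy]
      | smul a x _ hx => simp [inner_smul_left, hx]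
  have h1 := Submodule.finrank_add_finrank_orthogonal (vectorSpan ℝ X)
  have h0 : nor k ≠ 0 := fun h => by have := norm_nor k; simp [h] at this
  rw [horth, finrank_span_singleton h0, finrank_euclideanSpace_fin] at h1
  unfold adim
  rw [hv]
  omega

/-! ### The two families of vertices -/

/-- The last of the first `2k` coordinates, which carries `t^{2k}` on the moment curve. -/
def lastIx {k : ℕ} (hk : 0 < k) : Fin (2 * k) := ⟨2 * k - 1, by omega⟩

/-- The point with parameter `t` of the moment curve in the first `2k` coordinates, at height
`w`. -/
noncomputable def momentPt {k : ℕ} (t w : ℝ) : EuclideanSpace ℝ (Fin (2 * k + 1 + 1)) :=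
  mk (fun i => t ^ (i.1 + 1)) 0 w

/-- The apex which makes the cyclic polytope `(2k+1)`-dimensional, pushed by `R`. -/
noncomputable def apexPt {k : ℕ} (hk : 0 < k) (R w : ℝ) :
    EuclideanSpace ℝ (Fin (2 * k + 1 + 1)) :=
  mk (Pi.single (lastIx hk) R) 1 w

/-- A point of a parabola in the plane of the coordinates `2k` and `2k+1`, pushed by `ρ`. -/
noncomputable def parPt {k : ℕ} (hk : 0 < k) (j ρ w : ℝ) :
    EuclideanSpace ℝ (Fin (2 * k + 1 + 1)) :=
  mk (Pi.single (lastIx hk) (j ^ 2 + ρ)) j w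

/-- The auxiliary points which make the parabolic polygon `(2k+1)`-dimensional, pushed by `R`. -/
noncomputable def sidePt {k : ℕ} (hk : 0 < k) (i : Fin (2 * k)) (R w : ℝ) :
    EuclideanSpace ℝ (Fin (2 * k + 1 + 1)) :=
  mk (Pi.single i 1 + Pi.single (lastIx hk) R) 0 w

/-- The vertices of the cyclic polytope with an apex. -/
noncomputable def cycPts {k : ℕ} (hk : 0 < k) (n : ℕ) (R w : ℝ) :
    Fin (n - 1) ⊕ Unit → EuclideanSpace ℝ (Fin (2 * k + 1 + 1)) :=
  Sum.elim (fun t => momentPt (t.1 : ℝ) w) (fun _ => apexPt hk R w)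

/-- The vertices of the thickened parabolic polygon, all pushed by `ρ`. -/
noncomputable def parPts {k : ℕ} (hk : 0 < k) (p : ℕ) (R ρ w : ℝ) :
    Fin (p - (2 * k - 1)) ⊕ {i : Fin (2 * k) // i ≠ lastIx hk} →
      EuclideanSpace ℝ (Fin (2 * k + 1 + 1)) :=
  Sum.elim (fun j => parPt hk (j.1 : ℝ) ρ w) (fun i => sidePt hk i.1 (R + ρ) w)

lemma inner_mk_nor {k : ℕ} (v : Fin (2 * k) → ℝ) (z w : ℝ) : ⟪mk v z w, nor k⟫ = w := by
  simp [nor, inner_mk]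

lemma cycPts_height {k : ℕ} (hk : 0 < k) (n : ℕ) (R w : ℝ) :
    ∀ x ∈ range (cycPts hk n R w), ⟪x, nor k⟫ = w := by
  rintro _ ⟨i | i, rfl⟩ <;> simp [cycPts, momentPt, apexPt, inner_mk_nor]

lemma parPts_height {k : ℕ} (hk : 0 < k) (p : ℕ) (R ρ w : ℝ) :
    ∀ x ∈ range (parPts hk p R ρ w), ⟪x, nor k⟫ = w := by
  rintro _ ⟨i | i, rfl⟩ <;> simp [parPts, parPt, sidePt, inner_mk_nor]

lemma cycPts_vertices {k : ℕ} (hk : 0 < k) {n : ℕ} (hn : 0 < n) {R : ℝ} (hR : 0 < R) (w : ℝ) :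
    ((convexHull ℝ (range (cycPts hk n R w))).extremePoints ℝ).ncard = n := by
  rw [extremePoints_ncard]
  · simp; omega
  · rintro (t | u)
    · -- On the curve this functional is `t² - (x - t)²`.
      refine ⟨lin (Pi.single ⟨0, by omega⟩ (2 * (t.1 : ℝ)) - Pi.single ⟨1, by omega⟩ 1) (-1) 0, ?_⟩
      rintro (x | u) hx
      · have hne : (x.1 : ℝ) ≠ t.1 := by
          intro h
          exact hx (congrArg _ (Fin.ext (by exact_mod_cast h)))
        have : 0 < ((x.1 : ℝ) - t.1) ^ 2 := by
          have := sub_ne_zero.2 hne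
          positivity
        simp only [cycPts, Sum.elim_inl, momentPt, lin_mk, sub_dotProduct, single_dotProduct]
        norm_num
        nlinarith
      · simp only [cycPts, Sum.elim_inl, Sum.elim_inr, momentPt, apexPt, lin_mk, sub_dotProduct,
          single_dotProduct]
        have h0 : (Pi.single (lastIx hk) R : Fin (2 * k) → ℝ) ⟨0, by omega⟩ = 0 :=
          Pi.single_eq_of_ne (by simp [lastIx, Fin.ext_iff]; omega) _
        have h1 : 0 ≤ (Pi.single (lastIx hk) R : Fin (2 * k) → ℝ) ⟨1, by omega⟩ :=
          by
          rw [Pi.single_apply]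
          split_ifs
          exacts [hR.le, le_rfl]
        rw [h0]
        norm_num
        nlinarith [sq_nonneg (t.1 : ℝ)]
    · refine ⟨lin 0 1 0, ?_⟩
      rintro (x | u') hx
      · simp [cycPts, momentPt, apexPt, lin_mk]
      · exact absurd rfl hx

lemma parPts_vertices {k : ℕ} (hk : 0 < k) {p : ℕ} (hp : 2 * k ≤ p) {R : ℝ} (hR : 0 < R)
    (ρ w : ℝ) :
    ((convexHull ℝ (range (parPts hk p R ρ w))).extremePoints ℝ).ncard = p := by
  rw [extremePoints_ncard]
  · simp [Fintype.card_subtype_compl]; omega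
  · rintro (t | i)
    · refine ⟨lin (-Pi.single (lastIx hk) 1) (2 * (t.1 : ℝ)) 0, ?_⟩
      rintro (x | i) hx
      · have hne : (x.1 : ℝ) ≠ t.1 := by
          intro h
          exact hx (congrArg _ (Fin.ext (by exact_mod_cast h)))
        have : 0 < ((x.1 : ℝ) - t.1) ^ 2 := by
          have := sub_ne_zero.2 hne
          positivity
        simp only [parPts, Sum.elim_inl, parPt, lin_mk, neg_dotProduct, single_dotProduct,
          Pi.single_eq_same]
        nlinarith
      · simp only [parPts, Sum.elim_inl, Sum.elim_inr, parPt, sidePt, lin_mk, neg_dotProduct,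
          single_dotProduct, Pi.single_eq_same, Pi.add_apply, Pi.single_eq_of_ne i.2.symm]
        nlinarith [sq_nonneg (t.1 : ℝ)]
    · refine ⟨lin (Pi.single i.1 1) 0 0, ?_⟩
      rintro (x | i') hx
      · simp [parPts, parPt, sidePt, lin_mk, Pi.single_eq_of_ne i.2.symm]
      · have hne : i.1 ≠ i'.1 := fun h => hx (congrArg _ (Subtype.ext h.symm))
        simp [parPts, sidePt, lin_mk, Pi.single_eq_of_ne i.2.symm, Pi.single_eq_of_ne hne.symm]

/-- Pairing the coefficients of a polynomial of degree at most `2k`, without the constant one,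
with a point of the moment curve evaluates the polynomial up to its constant term. -/
lemma coeff_dotProduct {k : ℕ} {p : Polynomial ℝ} (hp : p.natDegree ≤ 2 * k) (t : ℝ) :
    (fun i : Fin (2 * k) => p.coeff (i.1 + 1)) ⬝ᵥ (fun i => t ^ (i.1 + 1)) =
      p.eval t - p.coeff 0 := by
  rw [Polynomial.eval_eq_sum_range' (Nat.lt_succ_of_le hp), Finset.sum_range_succ', dotProduct,
    ← Fin.sum_univ_eq_sum_range (fun i => p.coeff (i + 1) * t ^ (i + 1))]
  simp

lemma cycPts_adim {k : ℕ} (hk : 0 < k) {n : ℕ} (hn : 2 * k + 2 ≤ n) (R w : ℝ) :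
    adim (convexHull ℝ (range (cycPts hk n R w))) = 2 * k + 1 := by
  refine adim_hull (cycPts_height hk n R w) ?_
  intro c s τ h
  -- A functional constant on the curve gives a polynomial with more than `2k` roots.
  have hc : c = 0 := by
    classical
    let q : Polynomial ℝ := ∑ i : Fin (2 * k), Polynomial.C (c i) * Polynomial.X ^ (i.1 + 1)
    have hqc : ∀ j : Fin (2 * k), q.coeff (j.1 + 1) = c j := by
      intro j
      simp only [q, Polynomial.finsetSum_coeff, Polynomial.coeff_C_mul, Polynomial.coeff_X_pow]
      rw [Finset.sum_eq_single j]
      · simp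
      · intro b _ hb
        have : ¬ (j.1 + 1 = b.1 + 1) := fun h => hb (Fin.ext (by omega))
        rw [if_neg this, mul_zero]
      · simp
    have hdeg : q.natDegree ≤ 2 * k := by
      refine Polynomial.natDegree_sum_le_of_forall_le _ _ ?_
      intro i _
      exact (Polynomial.natDegree_C_mul_X_pow_le _ _).trans i.2
    have heval : ∀ t, q.eval t = c ⬝ᵥ (fun i => t ^ (i.1 + 1)) := by
      intro t
      simp [q, Polynomial.eval_finsetSum, dotProduct]
    have hzero : q = 0 := by
      refine Polynomial.eq_zero_of_natDegree_lt_card_of_eval_eq_zero q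
        (f := fun i : Fin (n - 1) => (i.1 : ℝ)) ?_ ?_ ?_
      · intro i j hij
        exact Fin.ext (Nat.cast_injective (R := ℝ) hij)
      · intro i
        have := h _ ⟨Sum.inl i, rfl⟩ _ ⟨Sum.inl ⟨0, by omega⟩, rfl⟩
        simp only [cycPts, Sum.elim_inl, momentPt, lin_mk, ← heval] at this
        have h0 : q.eval 0 = 0 := by simp [heval, dotProduct]
        simp only [Nat.cast_zero, h0] at this
        linarith
      · simp; omega
    ext j
    rw [← hqc j, hzero]
    simp
  refine ⟨hc, ?_⟩
  have := h _ ⟨Sum.inl ⟨0, by omega⟩, rfl⟩ _ ⟨Sum.inr (), rfl⟩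
  simp only [cycPts, Sum.elim_inl, Sum.elim_inr, momentPt, apexPt, lin_mk, hc] at this
  simpa using this.symm

lemma parPts_adim {k : ℕ} (hk : 0 < k) {p : ℕ} (hp : 2 * k + 2 ≤ p) (R ρ w : ℝ) :
    adim (convexHull ℝ (range (parPts hk p R ρ w))) = 2 * k + 1 := by
  refine adim_hull (parPts_height hk p R ρ w) ?_
  intro c s τ h
  have h1 := h _ ⟨Sum.inl ⟨0, by omega⟩, rfl⟩ _ ⟨Sum.inl ⟨1, by omega⟩, rfl⟩
  have h2 := h _ ⟨Sum.inl ⟨0, by omega⟩, rfl⟩ _ ⟨Sum.inl ⟨2, by omega⟩, rfl⟩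
  simp only [parPts, Sum.elim_inl, parPt, lin_mk, dotProduct_single] at h1 h2
  norm_num at h1 h2
  have hl : c (lastIx hk) = 0 := by linarith
  have hs : s = 0 := by rw [hl] at h1; linarith
  refine ⟨?_, hs⟩
  ext i
  by_cases hi : i = lastIx hk
  · rw [hi, hl]; rfl
  · have h3 := h _ ⟨Sum.inl ⟨0, by omega⟩, rfl⟩ _ ⟨Sum.inr ⟨i, hi⟩, rfl⟩
    simp only [parPts, Sum.elim_inl, Sum.elim_inr, parPt, sidePt, lin_mk, dotProduct_single,
      dotProduct_add, hl, hs] at h3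
    simp only [Pi.zero_apply]
    linarith

/-! ### Mixed faces -/

/-- The functionals exposing the mixed faces. Restricted to the moment curve at height `a` the
functional is `M - ∏_{x ∈ S} (t - x)²`, and on the parabola at height `b` it is `M - (y - j)²`; the
coefficient of the height makes the two maxima agree. The coefficient `-1` of the coordinate
`lastIx hk` is the leading coefficient of `-∏ (t - x)²`. -/
lemma exists_functional {k : ℕ} (hk : 0 < k) {N : ℕ} (S : Finset (Fin N)) (hS : S.card = k)
    (j : ℝ) {a b : ℝ} (hab : a ≠ b) :
    ∃ (c : Fin (2 * k) → ℝ) (s h M : ℝ), c (lastIx hk) = -1 ∧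
      (∀ t, lin c s h (momentPt t a) = M - ∏ x ∈ S, (t - (x.1 : ℝ)) ^ 2) ∧
      (∀ y, lin c s h (parPt hk y 0 b) = M - (y - j) ^ 2) := by
  let g : Polynomial ℝ := ∏ x ∈ S, (Polynomial.X - Polynomial.C (x.1 : ℝ)) ^ 2
  have hmonic : g.Monic :=
    Polynomial.monic_prod_of_monic _ _ fun x _ => (Polynomial.monic_X_sub_C _).pow 2
  have hdeg : g.natDegree = 2 * k := by
    simp only [g]
    rw [Polynomial.natDegree_prod_of_monic _ _
      fun x _ => (Polynomial.monic_X_sub_C _).pow 2]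
    simp only [Polynomial.natDegree_pow, Polynomial.natDegree_X_sub_C, Finset.sum_const, hS,
      smul_eq_mul]
    ring
  have heval : ∀ t, g.eval t = ∏ x ∈ S, (t - (x.1 : ℝ)) ^ 2 := by
    intro t
    simp [g, Polynomial.eval_prod]
  have hba : b - a ≠ 0 := sub_ne_zero.2 hab.symm
  set h : ℝ := (g.coeff 0 - j ^ 2) / (b - a) with hh
  have hh' : h * b - h * a = g.coeff 0 - j ^ 2 := by
    rw [hh]; field_simp
  have hlast : (-g).coeff ((lastIx hk).1 + 1) = -1 := by
    have : (lastIx hk).1 + 1 = g.natDegree := by rw [hdeg, lastIx]; simp only; omega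
    rw [this, Polynomial.coeff_neg, Polynomial.coeff_natDegree, hmonic]
  refine ⟨fun i => (-g).coeff (i.1 + 1), 2 * j, h, g.coeff 0 + h * a, hlast, ?_, ?_⟩
  · intro t
    rw [momentPt, lin_mk, coeff_dotProduct (by rw [Polynomial.natDegree_neg, hdeg]),
      Polynomial.eval_neg, heval, Polynomial.coeff_neg]
    ring
  · intro y
    rw [parPt, lin_mk, dotProduct_single, hlast]
    linarith

lemma exists_large {ι : Type*} [Finite ι] (f : ι → ℝ) : ∃ R, ∀ i, f i < R := by
  obtain ⟨R, hR⟩ := (Set.finite_range f).bddAbove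
  exact ⟨R + 1, fun i => (hR ⟨i, rfl⟩).trans_lt (lt_add_one R)⟩

/-- The construction for a distinguished pair of hyperplanes `a ≠ b`: every pair of a `k`-subset of
the curve points at height `a` and a point of the parabola at height `b` spans its own face. -/
lemma construction {k m : ℕ} (hk : 0 < k) (n : Fin m → ℕ) (hn : ∀ i, 2 * k + 2 ≤ n i)
    {a b : Fin m} (hab : a ≠ b) :
    ∃ P : Fin m → Set (EuclideanSpace ℝ (Fin (2 * k + 1 + 1))),
      (∀ i, (P i).Finite) ∧
      (∀ i, P i ⊆ {x | ⟪x, nor k⟫ = ((i.1 : ℕ) : ℝ)}) ∧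
      (∀ i, adim (convexHull ℝ (P i)) = 2 * k + 1) ∧
      (∀ i, ((convexHull ℝ (P i)).extremePoints ℝ).ncard = n i) ∧
      (n a - 1).choose k * (n b - (2 * k - 1)) ≤ totalFaces (convexHull ℝ (⋃ i, P i)) := by
  classical
  let I := {S : Finset (Fin (n a - 1)) // S.card = k} × Fin (n b - (2 * k - 1))
  have hab' : ((a.1 : ℕ) : ℝ) ≠ ((b.1 : ℕ) : ℝ) := by
    intro h
    exact hab (Fin.ext (by exact_mod_cast h))
  have hex := fun q : I => exists_functional hk q.1.1 q.1.2 (q.2.1 : ℝ) hab'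
  choose c s h M hlast hmom hpar using hex
  obtain ⟨R₁, hR₁⟩ := exists_large
    fun q : I => lin (c q) (s q) (h q) (apexPt hk 0 (a.1 : ℝ)) - M q
  obtain ⟨R₂, hR₂⟩ := exists_large
    fun q : I × Fin (2 * k) × Fin m =>
      lin (c q.1) (s q.1) (h q.1) (sidePt hk q.2.1 0 (q.2.2.1 : ℝ)) - M q.1
  obtain ⟨R₃, hR₃⟩ := exists_large
    fun q : I × (Σ i : Fin m, Fin (n i - (2 * k - 1))) =>
      lin (c q.1) (s q.1) (h q.1) (parPt hk (q.2.2.1 : ℝ) 0 (q.2.1.1 : ℝ)) - M q.1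
  obtain ⟨R, hR, h1, h2, h3⟩ : ∃ R : ℝ, 0 < R ∧ R₁ ≤ R ∧ R₂ ≤ R ∧ R₃ ≤ R :=
    ⟨max 1 (max R₁ (max R₂ R₃)), by positivity, by simp, by simp, by simp⟩
  let ρ : Fin m → ℝ := fun i => if i = b then 0 else R
  have hρ : ∀ i, 0 ≤ ρ i := by
    intro i
    simp only [ρ]
    split_ifs
    exacts [le_rfl, hR.le]
  let P : Fin m → Set (EuclideanSpace ℝ (Fin (2 * k + 1 + 1))) := fun i =>
    if i = a then range (cycPts hk (n i) R (i.1 : ℝ))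
    else range (parPts hk (n i) R (ρ i) (i.1 : ℝ))
  have hfin : ∀ i, (P i).Finite := by
    intro i
    simp only [P]
    split_ifs <;> exact Set.finite_range _
  refine ⟨P, hfin, ?_, ?_, ?_, ?_⟩
  · intro i x hx
    simp only [P] at hx
    split_ifs at hx
    exacts [cycPts_height hk _ _ _ x hx, parPts_height hk _ _ _ _ x hx]
  · intro i
    simp only [P]
    split_ifs
    exacts [cycPts_adim hk (hn i) _ _, parPts_adim hk (hn i) _ _ _]
  · intro i
    simp only [P]
    have := hn i
    split_ifs
    exacts [cycPts_vertices hk (by omega) hR _, parPts_vertices hk (by omega) hR _ _]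
  · have hmomX : ∀ t : Fin (n a - 1), momentPt (t.1 : ℝ) (a.1 : ℝ) ∈ ⋃ i, P i := by
      intro t
      refine mem_iUnion.2 ⟨a, ?_⟩
      simp only [P, if_pos]
      exact ⟨Sum.inl t, rfl⟩
    have hparX : ∀ j : Fin (n b - (2 * k - 1)), parPt hk (j.1 : ℝ) 0 (b.1 : ℝ) ∈ ⋃ i, P i := by
      intro j
      refine mem_iUnion.2 ⟨b, ?_⟩
      simp only [P, if_neg hab.symm, ρ, if_pos]
      exact ⟨Sum.inl j, rfl⟩
    have hle : ∀ q : I, ∀ x ∈ ⋃ i, P i, lin (c q) (s q) (h q) x ≤ M q := by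
      intro q x hx
      obtain ⟨i, hi⟩ := mem_iUnion.1 hx
      simp only [P] at hi
      split_ifs at hi with hia
      · subst hia
        obtain ⟨t | u, rfl⟩ := hi
        · simp only [cycPts, Sum.elim_inl, hmom]
          have : 0 ≤ ∏ x ∈ q.1.1, ((t.1 : ℝ) - (x.1 : ℝ)) ^ 2 :=
            Finset.prod_nonneg fun _ _ => sq_nonneg _
          linarith
        · have := hR₁ q
          simp only [cycPts, Sum.elim_inr, apexPt, lin_mk, dotProduct_single, hlast] at this ⊢
          linarith
      · obtain ⟨j | l, rfl⟩ := hi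
        · by_cases hib : i = b
          · subst hib
            simp only [parPts, Sum.elim_inl, ρ, if_pos, hpar]
            nlinarith [sq_nonneg ((j.1 : ℝ) - (q.2.1 : ℝ))]
          · have := hR₃ (q, ⟨i, j⟩)
            simp only [parPts, Sum.elim_inl, ρ, if_neg hib, parPt, lin_mk, dotProduct_single,
              hlast] at this ⊢
            linarith
        · have := hR₂ (q, l.1, i)
          have := hρ i
          simp only [parPts, Sum.elim_inr, sidePt, lin_mk, dotProduct_single, dotProduct_add,
            hlast] at *
          linarith
    let F : I → Set (EuclideanSpace ℝ (Fin (2 * k + 1 + 1))) := fun q =>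
      (lin (c q) (s q) (h q)).toExposed (convexHull ℝ (⋃ i, P i))
    have hatt : ∀ q : I, lin (c q) (s q) (h q) (parPt hk (q.2.1 : ℝ) 0 (b.1 : ℝ)) = M q := by
      intro q
      rw [hpar]; ring
    have hF : ∀ q : I, ∀ x ∈ ⋃ i, P i, (x ∈ F q ↔ lin (c q) (s q) (h q) x = M q) := by
      intro q x hx
      constructor
      · intro hxF
        refine le_antisymm (hle q x hx) ?_
        rw [← hatt q]
        exact hxF.2 _ (subset_convexHull ℝ _ (hparX q.2))
      · intro hxM
        refine ⟨subset_convexHull ℝ _ hx, ?_⟩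
        rw [hxM]
        exact le_on_convexHull _ (hle q)
    have hFinj : Function.Injective F := by
      have hmomF : ∀ (q : I) t, momentPt (t.1 : ℝ) (a.1 : ℝ) ∈ F q ↔ t ∈ q.1.1 := by
        intro q t
        rw [hF q _ (hmomX t), hmom, sub_eq_self, Finset.prod_eq_zero_iff]
        constructor
        · rintro ⟨x, hx, hx0⟩
          have h0 : (t.1 : ℝ) = x.1 := sub_eq_zero.1 (pow_eq_zero_iff two_ne_zero |>.1 hx0)
          have : t = x := Fin.ext (by exact_mod_cast h0)
          rwa [this]
        · intro ht
          exact ⟨t, ht, by simp⟩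
      have hparF : ∀ (q : I) (j : Fin (n b - (2 * k - 1))),
          parPt hk (j.1 : ℝ) 0 (b.1 : ℝ) ∈ F q ↔ j = q.2 := by
        intro q j
        rw [hF q _ (hparX j), hpar, sub_eq_self, pow_eq_zero_iff two_ne_zero, sub_eq_zero,
          Nat.cast_inj, Fin.ext_iff]
      intro q q' hqq
      refine Prod.ext (Subtype.ext (Finset.ext fun t => ?_)) ?_
      · rw [← hmomF, ← hmomF, hqq]
      · rw [← hparF, ← hqq, hparF]
    have hcard : (n a - 1).choose k * (n b - (2 * k - 1)) = (range F).ncard := by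
      rw [← Set.image_univ, Set.ncard_image_of_injective _ hFinj, Set.ncard_univ,
        Nat.card_eq_fintype_card, Fintype.card_prod, Fintype.card_finset_len]
      simp
    rw [hcard]
    refine Set.ncard_le_ncard ?_ (finite_faces (Set.finite_iUnion hfin))
    rintro _ ⟨q, rfl⟩
    exact ⟨ContinuousLinearMap.toExposed.isExposed, _, (hF q _ (hparX q.2)).2 (hatt q)⟩

/-! ### Counting -/

lemma count_bound {k n p : ℕ} (hn : 4 * k + 4 ≤ n) (hp : 4 * k + 4 ≤ p) :
    (1 / (2 ^ (k + 1) * (k.factorial : ℝ))) * ((p : ℝ) * (n : ℝ) ^ k) ≤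
      (((n - 1).choose k * (p - (2 * k - 1)) : ℕ) : ℝ) := by
  have h1 : ((n : ℝ) / 2) ^ k ≤ (k.factorial : ℝ) * ((n - 1).choose k : ℝ) := by
    have h := Nat.pow_sub_le_descFactorial (n - 1) k
    rw [Nat.descFactorial_eq_factorial_mul_choose] at h
    have h' : ((n - 1 + 1 - k : ℕ) : ℝ) ^ k ≤ (k.factorial : ℝ) * ((n - 1).choose k : ℝ) := by
      exact_mod_cast h
    refine le_trans (pow_le_pow_left₀ (by positivity) ?_ k) h'
    have : n ≤ 2 * (n - 1 + 1 - k) := by omega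
    have : (n : ℝ) ≤ 2 * ((n - 1 + 1 - k : ℕ) : ℝ) := by exact_mod_cast this
    linarith
  have h2 : (p : ℝ) / 2 ≤ ((p - (2 * k - 1) : ℕ) : ℝ) := by
    have : p ≤ 2 * (p - (2 * k - 1)) := by omega
    have : (p : ℝ) ≤ 2 * ((p - (2 * k - 1) : ℕ) : ℝ) := by exact_mod_cast this
    linarith
  have hf : (0 : ℝ) < k.factorial := by exact_mod_cast k.factorial_pos
  have h3 := mul_le_mul h1 h2 (by positivity) (by positivity)
  rw [div_mul_eq_mul_div, div_le_iff₀ (by positivity)]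
  push_cast
  calc 1 * ((p : ℝ) * (n : ℝ) ^ k) = 2 ^ (k + 1) * (((n : ℝ) / 2) ^ k * ((p : ℝ) / 2)) := by
        rw [div_pow, pow_succ]; field_simp
    _ ≤ 2 ^ (k + 1) * ((k.factorial : ℝ) * ((n - 1).choose k : ℝ) *
          ((p - (2 * k - 1) : ℕ) : ℝ)) := by gcongr
    _ = _ := by ring

/-- With `a` a largest index and `b` a second largest one, each summand is at most
`n b * n a ^ k`. -/
lemma exists_dominant {m k : ℕ} (hk : 0 < k) (hm : 2 ≤ m) (n : Fin m → ℕ) :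
    ∃ a b : Fin m, a ≠ b ∧
      ∑ i : Fin m, ∑ j : Fin m, (if i ≠ j then (n i : ℝ) * (n j : ℝ) ^ k else 0) ≤
        (m : ℝ) ^ 2 * ((n b : ℝ) * (n a : ℝ) ^ k) := by
  have : NeZero m := ⟨by omega⟩
  obtain ⟨a, -, ha⟩ := Finset.exists_max_image (Finset.univ : Finset (Fin m)) n ⟨0, by simp⟩
  have hne : ((Finset.univ : Finset (Fin m)).erase a).Nonempty := by
    rw [← Finset.card_pos, Finset.card_erase_of_mem (Finset.mem_univ _), Finset.card_fin]
    omega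
  obtain ⟨b, hb, hbmax⟩ := Finset.exists_max_image _ n hne
  refine ⟨a, b, (Finset.ne_of_mem_erase hb).symm, ?_⟩
  have hbound : ∀ i j : Fin m, (if i ≠ j then (n i : ℝ) * (n j : ℝ) ^ k else 0) ≤
      (n b : ℝ) * (n a : ℝ) ^ k := by
    intro i j
    split_ifs with hij
    · by_cases hia : i = a
      · have hj : n j ≤ n b := hbmax j (Finset.mem_erase.2 ⟨fun h => hij (hia.trans h.symm), by simp⟩)
        have hjb : (n j : ℝ) ≤ n b := by exact_mod_cast hj
        have hja : (n j : ℝ) ≤ n a := by exact_mod_cast ha j (by simp)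
        obtain ⟨l, rfl⟩ : ∃ l, k = l + 1 := ⟨k - 1, by omega⟩
        rw [hia, pow_succ, pow_succ]
        calc (n a : ℝ) * ((n j : ℝ) ^ l * n j) ≤ (n a : ℝ) * ((n a : ℝ) ^ l * n b) := by gcongr
          _ = _ := by ring
      · have hi : (n i : ℝ) ≤ n b := by
          exact_mod_cast hbmax i (Finset.mem_erase.2 ⟨hia, by simp⟩)
        have hja : (n j : ℝ) ≤ n a := by exact_mod_cast ha j (by simp)
        gcongr
    · positivity
  calc _ ≤ ∑ i : Fin m, ∑ j : Fin m, (n b : ℝ) * (n a : ℝ) ^ k :=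
        Finset.sum_le_sum fun i _ => Finset.sum_le_sum fun j _ => hbound i j
    _ = _ := by simp; ring

theorem stmt1 (d m : ℕ) (hd : 3 ≤ d) (hodd : Odd d) (hm : 2 ≤ m) :
    ∃ c : ℝ, 0 < c ∧ ∃ n₀ : ℕ,
      ∀ n : Fin m → ℕ, (∀ i, n₀ ≤ n i) →
        ∃ (u : EuclideanSpace ℝ (Fin (d + 1))) (t : Fin m → ℝ)
          (P : Fin m → Set (EuclideanSpace ℝ (Fin (d + 1)))),
          ‖u‖ = 1 ∧ StrictMono t ∧
          (∀ i, (P i).Finite) ∧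
          (∀ i, P i ⊆ {x | ⟪x, u⟫ = t i}) ∧
          (∀ i, adim (convexHull ℝ (P i)) = d) ∧
          (∀ i, ((convexHull ℝ (P i)).extremePoints ℝ).ncard = n i) ∧
          c * ∑ i : Fin m, ∑ j : Fin m,
              (if i ≠ j then (n i : ℝ) * (n j : ℝ) ^ (d / 2) else 0) ≤
            (totalFaces (convexHull ℝ (⋃ i, P i)) : ℝ) := by
  obtain ⟨k, rfl⟩ := hodd
  have hk : 0 < k := by omega
  have hk2 : (2 * k + 1) / 2 = k := by omega
  have hm0 : (0 : ℝ) < m := by exact_mod_cast (by omega : 0 < m)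
  have hf : (0 : ℝ) < k.factorial := by exact_mod_cast k.factorial_pos
  refine ⟨1 / (2 ^ (k + 1) * (k.factorial : ℝ)) / (m : ℝ) ^ 2, by positivity, 4 * k + 4, ?_⟩
  intro n hn
  obtain ⟨a, b, hab, hsum⟩ := exists_dominant hk hm n
  obtain ⟨P, hfin, hsub, hdim, hvert, hfaces⟩ :=
    construction hk n (fun i => by have := hn i; omega) hab
  refine ⟨nor k, fun i => ((i.1 : ℕ) : ℝ), P, norm_nor k, ?_, hfin, hsub, hdim, hvert, ?_⟩
  · intro i j hij
    exact Nat.cast_lt.2 hij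
  · rw [hk2]
    calc _ ≤ 1 / (2 ^ (k + 1) * (k.factorial : ℝ)) / (m : ℝ) ^ 2 *
          ((m : ℝ) ^ 2 * ((n b : ℝ) * (n a : ℝ) ^ k)) :=
          mul_le_mul_of_nonneg_left hsum (by positivity)
      _ = 1 / (2 ^ (k + 1) * (k.factorial : ℝ)) * ((n b : ℝ) * (n a : ℝ) ^ k) := by
          field_simp
      _ ≤ (((n a - 1).choose k * (n b - (2 * k - 1)) : ℕ) : ℝ) := count_bound (hn a) (hn b)
      _ ≤ _ := by exact_mod_cast hfaces
end

section
/- Let d ≥ 2 and m ≥ 2, let Π_1, …, Π_m be parallel hyperplanes in E^{d+1} with Π_j above Π_i for j > i, let P_i ⊂ Π_i be finite sets with each 𝒫_i = conv(P_i) d-dimensional, let P = P_1 ∪ … ∪ P_m and 𝒫 = conv(P). Then there exist finite sets P_i' ⊂ Π_i such that, writing P' = P_1' ∪ … ∪ P_m' and 𝒫' = conv(P'): (i) 𝒫' has the same number of vertices as 𝒫; (ii) every nonempty proper exposed face of 𝒫' other than 𝒫' ∩ Π_1 and 𝒫' ∩ Π_m is a simplex; and (iii) f_k(𝒫) ≤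 f_k(𝒫') for all 1 ≤ k ≤ d. (Lemma 2.2.) -/
/-!
The points of `P` are replaced by the vertices `v` of the polytope `K`, and these are moved
slightly inside their hyperplanes (layers) to a configuration `c` in general position (`GenPos`):
the only affine dependencies left are those forced by the dimension of the space and of the layers.
Such configurations are dense (`exists_perturb`), so it suffices that each of the required
properties holds for all general-position configurations close enough to `v`.

* Vertices. Being convexly independent is an open condition (`notMem_stable`), so the vertices of
  the new polytope `L` are exactly the moved points.
* Simplices. In general position, the points on a hyperplane not parallel to the layers are
  affinely independent (`indep_or_parallel`). A proper face is cut out by a supporting hyperplane,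
  and a supporting hyperplane parallel to the layers cuts out the bottom or the top facet.
* Face numbers. Let `F` be a `k`-face of `K` exposed by a normal `n` not orthogonal to the layers.
  Choose `x ∈ F` outside every affine span of vertices that does not contain `F`, and let `y` be the
  point of `L` nearest to `x + ε n`. The hyperplane through `y` orthogonal to `x + ε n - y` supports
  `L` and is not parallel to the layers, so it cuts out a simplex. If the perturbation is small,
  `x` is a convex combination of the original positions of the vertices of this simplex
  (`exists_rho`), hence of those of them that lie in `F`. By the choice of `x` these span `F`
  affinely, and `k + 1` affinely independent ones among them give a subsimplex, which is
  an exposed `k`-face of `L` (`exposed_subsimplex`, `face_stable`). The bottom and top facets keep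
  their vertices and their dimension. The face `F` is recovered from the new face, because the
  hull determines its vertex set (`hull_injective`) and the affine span of the original positions
  determines `F` (`face_inj`). So `k`-faces of `K` inject into `k`-faces of `L`.
-/

open Set Pointwise RealInnerProductSpace

/-- The number of `k`-dimensional nonempty exposed faces of `C`. -/
noncomputable def fCount {N : ℕ} (C : Set (EuclideanSpace ℝ (Fin N))) (k : ℕ) : ℕ :=
  {F : Set (EuclideanSpace ℝ (Fin N)) |
    IsExposed ℝ C F ∧ F.Nonempty ∧ adim F = k}.ncard

/-- A compact convex set is a simplex if its extreme points (vertices) are affinely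
independent. -/
def IsSimplexSet {N : ℕ} (F : Set (EuclideanSpace ℝ (Fin N))) : Prop :=
  AffineIndependent ℝ ((↑) : (F.extremePoints ℝ) → EuclideanSpace ℝ (Fin N))

open Filter Topology

/-! ### Exposed faces of polytopes -/

section General

variable {E : Type*} [NormedAddCommGroup E] [InnerProductSpace ℝ E] {ι : Type*}

/-- A point of a polytope at which a functional attains an upper bound for its values on the
generators is a convex combination of those generators where the bound is attained. -/
lemma mem_face (l : StrongDual ℝ E) (v : ι → E) (T : Set ι) (α : ℝ) (h : ∀ j ∈ T, l (v j) ≤ α)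
    {x : E} (hx : x ∈ convexHull ℝ (v '' T)) (hxα : l x = α) :
    x ∈ convexHull ℝ (v '' {j ∈ T | l (v j) = α}) := by
  set A := convexHull ℝ (v '' {j ∈ T | l (v j) = α}) with hA
  have hconv : Convex ℝ {y : E | l y ≤ α ∧ (l y = α → y ∈ A)} := by
    rintro y ⟨hy1, hy2⟩ z ⟨hz1, hz2⟩ a b ha hb hab
    have hαα : α = a * α + b * α := by rw [← add_mul, hab, one_mul]
    have hya := mul_le_mul_of_nonneg_left hy1 ha
    have hzb := mul_le_mul_of_nonneg_left hz1 hb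
    have hle : l (a • y + b • z) ≤ α := by
      simp only [map_add, map_smul, smul_eq_mul]
      linarith
    refine ⟨hle, fun heq => ?_⟩
    simp only [map_add, map_smul, smul_eq_mul] at heq
    rcases ha.eq_or_lt with rfl | ha
    · have : b = 1 := by linarith
      subst this
      simpa using hz2 (by simpa using heq)
    rcases hb.eq_or_lt with rfl | hb
    · have : a = 1 := by linarith
      subst this
      simpa using hy2 (by simpa using heq)
    have h1 : l y = α := by
      by_contra hne
      have := lt_of_le_of_ne hy1 hne
      linarith [mul_lt_mul_of_pos_left this ha]
    have h2 : l z = α := by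
      by_contra hne
      have := lt_of_le_of_ne hz1 hne
      linarith [mul_lt_mul_of_pos_left this hb]
    exact convex_convexHull ℝ _ (hy2 h1) (hz2 h2) ha.le hb.le hab
  have hsub : convexHull ℝ (v '' T) ⊆ {y : E | l y ≤ α ∧ (l y = α → y ∈ A)} := by
    refine convexHull_min ?_ hconv
    rintro _ ⟨j, hj, rfl⟩
    exact ⟨h j hj, fun hj' => subset_convexHull ℝ _ ⟨j, ⟨hj, hj'⟩, rfl⟩⟩
  exact (hsub hx).2 hxα

lemma hull_le (l : StrongDual ℝ E) (v : ι → E) (T : Set ι) (α : ℝ) (h : ∀ j ∈ T, l (v j) ≤ α)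
    {x : E} (hx : x ∈ convexHull ℝ (v '' T)) : l x ≤ α := by
  have : convexHull ℝ (v '' T) ⊆ {y | l y ≤ α} := by
    refine convexHull_min ?_ (convex_halfSpace_le l.toLinearMap.isLinear α)
    rintro _ ⟨j, hj, rfl⟩
    exact h j hj
  exact this hx

lemma hull_eq (l : StrongDual ℝ E) (v : ι → E) (T : Set ι) (α : ℝ) (h : ∀ j ∈ T, l (v j) = α)
    {x : E} (hx : x ∈ convexHull ℝ (v '' T)) : l x = α := by
  refine le_antisymm (hull_le l v T α (fun j hj => (h j hj).le) hx) ?_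
  have := hull_le (-l) v T (-α) (fun j hj => by simp [h j hj]) hx
  simpa using this

/-- The face of a polytope exposed by a functional is spanned by the generators at which the
functional is maximal. -/
lemma face_eq (l : StrongDual ℝ E) (v : ι → E) (α : ℝ) (h : ∀ j, l (v j) ≤ α)
    (hα : ∃ j, l (v j) = α) :
    {x ∈ convexHull ℝ (range v) | ∀ y ∈ convexHull ℝ (range v), l y ≤ l x} =
      convexHull ℝ (v '' {j | l (v j) = α}) := by
  obtain ⟨j0, hj0⟩ := hα
  ext x
  constructor
  · rintro ⟨hx, hmax⟩
    rw [← image_univ] at hx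
    have h1 : l x = α := le_antisymm (hull_le l v univ α (fun j _ => h j) hx)
      (hj0 ▸ hmax _ (subset_convexHull ℝ _ ⟨j0, rfl⟩))
    simpa using mem_face l v univ α (fun j _ => h j) hx h1
  · intro hx
    refine ⟨convexHull_mono (image_subset_range _ _) hx, fun y hy => ?_⟩
    rw [hull_eq l v _ α (fun j hj => hj) hx]
    rw [← image_univ] at hy
    exact hull_le l v univ α (fun j _ => h j) hy

lemma isExposed_hull (l : StrongDual ℝ E) (v : ι → E) (α : ℝ) (h : ∀ j, l (v j) ≤ α) :
    IsExposed ℝ (convexHull ℝ (range v)) (convexHull ℝ (v '' {j | l (v j) = α})) := by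
  rintro hne
  rw [convexHull_nonempty_iff, image_nonempty] at hne
  exact ⟨l, (face_eq l v α h hne).symm⟩

/-- Every nonempty exposed face of a polytope comes with a functional, its maximum and the set of
generators where the maximum is attained. -/
lemma exposed_data (v : ι → E) {F : Set E}
    (hF : IsExposed ℝ (convexHull ℝ (range v)) F) (hne : F.Nonempty) :
    ∃ (l : StrongDual ℝ E) (α : ℝ), (∀ j, l (v j) ≤ α) ∧ (∃ j, l (v j) = α) ∧
      F = convexHull ℝ (v '' {j | l (v j) = α}) := by
  obtain ⟨l, hl⟩ := hF hne
  obtain ⟨x, hx⟩ := hne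
  have hx' := hx
  rw [hl] at hx'
  have h : ∀ j, l (v j) ≤ l x := fun j => hx'.2 _ (subset_convexHull ℝ _ ⟨j, rfl⟩)
  have hm := mem_face l v univ (l x) (fun j _ => h j) (by simpa using hx'.1) rfl
  have hα : ∃ j, l (v j) = l x := by
    have := (convexHull_nonempty_iff.1 ⟨x, hm⟩)
    obtain ⟨_, j, hj, rfl⟩ := this
    exact ⟨j, hj.2⟩
  exact ⟨l, l x, h, hα, by rw [hl, face_eq l v (l x) h hα]⟩

lemma finite_faces_s2 [Finite ι] (v : ι → E) :
    {F : Set E | IsExposed ℝ (convexHull ℝ (range v)) F ∧ F.Nonempty}.Finite := by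
  refine (finite_range (fun T : Set ι => convexHull ℝ (v '' T))).subset ?_
  rintro F ⟨hF, hne⟩
  obtain ⟨l, α, -, -, rfl⟩ := exposed_data v hF hne
  exact ⟨_, rfl⟩

/-- An exposed face of a polytope is recovered from its affine span. -/
lemma face_inj (v : ι → E) {F G : Set E}
    (hF : IsExposed ℝ (convexHull ℝ (range v)) F) (hFne : F.Nonempty)
    (hG : IsExposed ℝ (convexHull ℝ (range v)) G) (hGne : G.Nonempty)
    (h : affineSpan ℝ F = affineSpan ℝ G) : F = G := by
  have key : ∀ {F G : Set E}, IsExposed ℝ (convexHull ℝ (range v)) F → F.Nonempty →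
      IsExposed ℝ (convexHull ℝ (range v)) G → G.Nonempty →
      affineSpan ℝ F = affineSpan ℝ G → F ⊆ G := by
    intro F G hF hFne hG hGne h x hx
    have hxG : x ∈ affineSpan ℝ G := h ▸ subset_affineSpan ℝ F hx
    obtain ⟨lF, hlF⟩ := hF hFne
    obtain ⟨l, hl⟩ := hG hGne
    obtain ⟨g, hg⟩ := hGne
    have hg' := hg
    rw [hl] at hg'
    -- the functional exposing `G` is constant on the affine span of `G`
    have hconst : affineSpan ℝ G ≤ (AffineSubspace.mk' (l g) (⊥ : Submodule ℝ ℝ)).comap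
        l.toLinearMap.toAffineMap := by
      rw [affineSpan_le]
      intro w hw
      have hw' := hw
      rw [hl] at hw'
      have : l w = l g := le_antisymm (hg'.2 _ hw'.1) (hw'.2 _ hg'.1)
      simp [this]
    have hlx : l x = l g := by
      have := hconst hxG
      simpa [sub_eq_zero] using this
    rw [hlF] at hx
    rw [hl]
    exact ⟨hx.1, fun y hy => hlx ▸ hg'.2 y hy⟩
  exact Subset.antisymm (key hF hFne hG hGne h) (key hG hGne hF hFne h.symm)

/-- Membership in the convex hulls of subfamilies is stable from the outside: a point that is close
to the hull of a slightly perturbed subfamily lies in the hull of the original subfamily. -/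
lemma exists_rho [Finite ι] (v : ι → E) (x : E) :
    ∃ ρ > 0, ∀ (T : Set ι) (c : ι → E), (∀ j, dist (c j) (v j) < ρ) →
      ∀ y ∈ convexHull ℝ (c '' T), dist y x < ρ → x ∈ convexHull ℝ (v '' T) := by
  have key : ∀ T : Set ι, ∀ᶠ ρ in 𝓝[>] (0 : ℝ), ∀ c : ι → E, (∀ j, dist (c j) (v j) < ρ) →
      ∀ y ∈ convexHull ℝ (c '' T), dist y x < ρ → x ∈ convexHull ℝ (v '' T) := by
    intro T
    by_cases hx : x ∈ convexHull ℝ (v '' T)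
    · exact Eventually.of_forall fun _ _ _ _ _ _ => hx
    rcases T.eq_empty_or_nonempty with rfl | hT
    · exact Eventually.of_forall fun _ _ _ _ hy _ => by simp at hy
    have hcl : IsClosed (convexHull ℝ (v '' T)) := (toFinite (v '' T)).isClosed_convexHull ℝ
    have hne : (convexHull ℝ (v '' T)).Nonempty := by
      rw [convexHull_nonempty_iff]; exact hT.image v
    have hpos : 0 < Metric.infDist x (convexHull ℝ (v '' T)) :=
      (hcl.notMem_iff_infDist_pos hne).1 hx
    have : ∀ᶠ ρ in 𝓝[>] (0 : ℝ), ρ < Metric.infDist x (convexHull ℝ (v '' T)) / 2 :=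
      nhdsWithin_le_nhds (Iio_mem_nhds (by linarith))
    filter_upwards [this] with ρ hρ c hc y hy hyx
    exfalso
    have hsub : convexHull ℝ (c '' T) ⊆ Metric.thickening ρ (convexHull ℝ (v '' T)) := by
      refine convexHull_min ?_ ((convex_convexHull ℝ _).thickening ρ)
      rintro _ ⟨j, hj, rfl⟩
      exact Metric.mem_thickening_iff.2 ⟨v j, subset_convexHull ℝ _ ⟨j, hj, rfl⟩, hc j⟩
    obtain ⟨w, hw, hyw⟩ := Metric.mem_thickening_iff.1 (hsub hy)
    have h1 := Metric.infDist_le_dist_of_mem (x := x) hw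
    have h2 := dist_triangle_left x w y
    linarith
  obtain ⟨ρ, hρ, hpos⟩ := ((eventually_all.2 key).and self_mem_nhdsWithin).exists
  exact ⟨ρ, hpos, hρ⟩

/-- A convex set is not covered by finitely many affine subspaces unless one of them contains it. -/
lemma exists_generic {κ : Type*} (s : Finset κ) (A : κ → AffineSubspace ℝ E) {F : Set E}
    (hF : Convex ℝ F) (hne : F.Nonempty) (hA : ∀ i ∈ s, ¬ F ⊆ A i) :
    ∃ x ∈ F, ∀ i ∈ s, x ∉ A i := by
  classical
  induction s using Finset.induction_on with
  | empty => exact ⟨_, hne.some_mem, by simp⟩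
  | insert a s ha ih =>
    obtain ⟨x, hxF, hx⟩ := ih fun i hi => hA i (Finset.mem_insert_of_mem hi)
    obtain ⟨y, hyF, hy⟩ := not_subset.1 (hA a (Finset.mem_insert_self _ _))
    -- each subspace contains at most one point of the segment from `x` to `y`
    have hfin : ∀ i ∈ insert a s, {r : ℝ | AffineMap.lineMap x y r ∈ A i}.Finite := by
      intro i hi
      refine Set.Subsingleton.finite fun r hr r' hr' => ?_
      by_contra hne
      have hall : ∀ q : ℝ, AffineMap.lineMap x y q ∈ A i := by
        intro q
        have := AffineMap.lineMap_mem ((q - r) / (r' - r)) hr hr'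
        convert this using 1
        have hd : r' - r ≠ 0 := sub_ne_zero.2 (Ne.symm hne)
        simp only [AffineMap.lineMap_apply_module]
        match_scalars <;> field_simp <;> ring
      rcases Finset.mem_insert.1 hi with rfl | hi
      · exact hy (by simpa using hall 1)
      · exact hx i hi (by simpa using hall 0)
    have hun : (⋃ i ∈ insert a s, {r : ℝ | AffineMap.lineMap x y r ∈ A i}).Finite :=
      (insert a s).finite_toSet.biUnion hfin
    obtain ⟨r, hr, hr'⟩ := (Set.Icc_infinite (zero_lt_one' ℝ)).exists_notMem_finite hun
    refine ⟨AffineMap.lineMap x y r, hF.lineMap_mem hxF hyF hr, fun i hi hmem => hr' ?_⟩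
    exact mem_biUnion hi hmem

lemma affineIndependent_subset {c : ι → E} {S T : Set ι} (h : S ⊆ T)
    (hT : AffineIndependent ℝ (fun j : T => c j)) : AffineIndependent ℝ (fun j : S => c j) :=
  hT.comp_embedding ⟨inclusion h, inclusion_injective h⟩

/-- Linear functionals take arbitrarily prescribed values on the edges from one vertex of a
simplex. -/
lemma exists_functional_s2 {c : ι → E} {T : Set ι} (hT : AffineIndependent ℝ (fun j : T => c j))
    {j₀ : ι} (hj₀ : j₀ ∈ T) (g : ι → ℝ) (hg : g j₀ = 0) :
    ∃ r : E →ₗ[ℝ] ℝ, ∀ j ∈ T, r (c j - c j₀) = g j := by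
  have hli := (affineIndependent_iff_linearIndependent_vsub ℝ _ (⟨j₀, hj₀⟩ : T)).1 hT
  obtain ⟨r, hr⟩ := LinearMap.exists_extend
    ((Module.Basis.span hli).constr ℝ (fun i => g i.1.1))
  refine ⟨r, fun j hj => ?_⟩
  by_cases hjj : j = j₀
  · subst hjj; simp [hg]
  · let i : {x : T // x ≠ ⟨j₀, hj₀⟩} := ⟨⟨j, hj⟩, fun h => hjj (congrArg Subtype.val h)⟩
    have h1 := LinearMap.congr_fun hr (Module.Basis.span hli i)
    rw [Module.Basis.constr_basis] at h1
    rw [← show g i.1.1 = g j from rfl, ← h1]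
    simp [Module.Basis.span_apply, i]

/-- Every subset of the vertices of an exposed simplex of a polytope spans an exposed face. -/
lemma exposed_subsimplex [FiniteDimensional ℝ E] [Finite ι] (c : ι → E) (l : StrongDual ℝ E)
    (β : ℝ) (h : ∀ j, l (c j) ≤ β)
    (hT : AffineIndependent ℝ (fun j : {j | l (c j) = β} => c j)) (S : Set ι)
    (hS : S ⊆ {j | l (c j) = β}) :
    IsExposed ℝ (convexHull ℝ (range c)) (convexHull ℝ (c '' S)) := by
  classical
  rcases S.eq_empty_or_nonempty with rfl | ⟨j₀, hj₀⟩
  · simp [IsExposed]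
  obtain ⟨r, hr⟩ := exists_functional_s2 hT (hS hj₀) (fun j => if j ∈ S then 0 else -1) (by simp [hj₀])
  -- tilting `l` slightly by `r` keeps the maximum on `S` and destroys it elsewhere
  have key : ∀ j, ∀ᶠ ε in 𝓝[>] (0 : ℝ), j ∉ S → l (c j) + ε * r (c j - c j₀) < β := by
    intro j
    by_cases hj : l (c j) = β
    · filter_upwards [self_mem_nhdsWithin] with ε hε hjS
      have hε : 0 < ε := hε
      rw [hr j hj, if_neg hjS, hj]
      linarith
    · have hlt := lt_of_le_of_ne (h j) hj
      have hcont : Tendsto (fun ε : ℝ => l (c j) + ε * r (c j - c j₀)) (𝓝 0) (𝓝 (l (c j))) := by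
        have : Continuous (fun ε : ℝ => l (c j) + ε * r (c j - c j₀)) := by fun_prop
        simpa using this.tendsto 0
      filter_upwards [nhdsWithin_le_nhds (hcont.eventually (gt_mem_nhds hlt))] with ε hε _ using hε
  obtain ⟨ε, hε⟩ := (eventually_all.2 key).exists
  let l' : StrongDual ℝ E := l + ε • LinearMap.toContinuousLinearMap r
  have hl' : ∀ x, l' x = l x + ε * r x := fun x => by simp [l']
  have hin : ∀ j ∈ S, l' (c j) = β + ε * r (c j₀) := by
    intro j hj
    have h1 := hr j (hS hj)
    rw [if_pos hj, map_sub] at h1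
    have h2 : l (c j) = β := hS hj
    rw [hl', h2, sub_eq_zero.1 h1]
  have hout : ∀ j, j ∉ S → l' (c j) < β + ε * r (c j₀) := by
    intro j hj
    have := hε j hj
    rw [map_sub] at this
    rw [hl']; linarith
  have hset : S = {j | l' (c j) = β + ε * r (c j₀)} := by
    ext j
    refine ⟨hin j, fun hj => ?_⟩
    by_contra hjS
    exact (hout j hjS).ne hj
  rw [hset]
  refine isExposed_hull l' c _ fun j => ?_
  by_cases hj : j ∈ S
  · exact (hin j hj).le
  · exact (hout j hj).le

end General

/-! ### General position in layers -/

section Layers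

variable {E : Type*} [NormedAddCommGroup E] [InnerProductSpace ℝ E] {ι : Type*}

/-- Index sets that are affinely independent for generic points of prescribed heights `τ` in a
`(d + 1)`-dimensional space: sets of at most `d + 1` indices, and sets of at most `d + 2` indices
whose points do not all have the same height. -/
def GoodSet (d : ℕ) (τ : ι → ℝ) (T : Set ι) : Prop :=
  T.ncard ≤ d + 1 ∨ (T.ncard ≤ d + 2 ∧ ¬ ∃ a, ∀ j ∈ T, τ j = a)

/-- A configuration `c` of points with heights `τ` is in general position if all dependencies
are forced by the dimension of the space and of the layers. -/
def GenPos (d : ℕ) (τ : ι → ℝ) (c : ι → E) : Prop :=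
  ∀ T : Set ι, GoodSet d τ T → AffineIndependent ℝ (fun j : T => c j)

lemma finrank_of_affineIndependent [Finite ι] {c : ι → E} {T : Set ι}
    (h : AffineIndependent ℝ (fun j : T => c j)) {k : ℕ} (hk : T.ncard = k + 1) :
    Module.finrank ℝ (vectorSpan ℝ (c '' T)) = k := by
  classical
  have := Fintype.ofFinite T
  rw [image_eq_range]
  refine h.finrank_vectorSpan ?_
  rw [← hk, Set.ncard_eq_toFinset_card', toFinset_card]

lemma finrank_orthogonal [FiniteDimensional ℝ E] {d : ℕ} (hd : Module.finrank ℝ E = d + 1)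
    {u : E} (hu : u ≠ 0) : Module.finrank ℝ (ℝ ∙ u)ᗮ = d := by
  have : Fact (Module.finrank ℝ E = d + 1) := ⟨hd⟩
  exact Submodule.finrank_orthogonal_span_singleton hu

lemma vectorSpan_le_orthogonal {c : ι → E} {T : Set ι} {h : E} {β : ℝ}
    (hT : ∀ j ∈ T, ⟪h, c j⟫ = β) : vectorSpan ℝ (c '' T) ≤ (ℝ ∙ h)ᗮ := by
  rw [vectorSpan_def, Submodule.span_le]
  rintro _ ⟨_, ⟨i, hi, rfl⟩, _, ⟨j, hj, rfl⟩, rfl⟩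
  simp only [SetLike.mem_coe]
  rw [Submodule.mem_orthogonal_singleton_iff_inner_right, vsub_eq_sub, inner_sub_right, hT i hi,
    hT j hj, sub_self]

/-- A layer contains a point outside the span of an affinely independent set `T` whenever the
insertion of an index of that layer leaves the index set good. -/
lemma exists_notMem_span [FiniteDimensional ℝ E] [Finite ι] {d : ℕ}
    (hd : Module.finrank ℝ E = d + 1) {u : E} (hu : u ≠ 0) {τ : ι → ℝ} {c : ι → E}
    (hc : ∀ j, ⟪c j, u⟫ = τ j) {T : Set ι} {i : ι} (hi : i ∉ T) (hgood : GoodSet d τ (insert i T))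
    (hT : AffineIndependent ℝ (fun j : T => c j)) :
    ∃ q : E, ⟪q, u⟫ = τ i ∧ q ∉ affineSpan ℝ (c '' T) := by
  by_contra! hall
  have hcard := ncard_insert_of_notMem hi (toFinite T)
  have hne : T.Nonempty := by
    have := (affineSpan_nonempty (k := ℝ) (s := c '' T)).1 ⟨_, hall _ (hc i)⟩
    exact image_nonempty.1 this
  obtain ⟨k, hk⟩ : ∃ k, T.ncard = k + 1 :=
    Nat.exists_eq_succ_of_ne_zero ((ncard_pos (toFinite T)).2 hne).ne'
  have hle : (ℝ ∙ u)ᗮ ≤ vectorSpan ℝ (c '' T) := by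
    intro w hw
    rw [Submodule.mem_orthogonal_singleton_iff_inner_left] at hw
    have h1 : w + c i ∈ affineSpan ℝ (c '' T) := hall _ (by rw [inner_add_left, hw, hc, zero_add])
    rw [← direction_affineSpan]
    simpa using AffineSubspace.vsub_mem_direction h1 (hall _ (hc i))
  have h1 := Submodule.finrank_mono hle
  rw [finrank_orthogonal hd hu, finrank_of_affineIndependent hT hk] at h1
  rcases hgood with hg | ⟨hg, hmono⟩
  · omega
  · have heq : (ℝ ∙ u)ᗮ = vectorSpan ℝ (c '' T) := by
      refine Submodule.eq_of_le_of_finrank_le hle ?_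
      rw [finrank_orthogonal hd hu, finrank_of_affineIndependent hT hk]
      omega
    refine hmono ⟨τ i, ?_⟩
    rintro j (rfl | hj)
    · rfl
    · have hmem : c j - c i ∈ vectorSpan ℝ (c '' T) := by
        rw [← direction_affineSpan]
        exact AffineSubspace.vsub_mem_direction (subset_affineSpan ℝ _ ⟨j, hj, rfl⟩)
          (hall _ (hc i))
      rw [← heq, Submodule.mem_orthogonal_singleton_iff_inner_left, inner_sub_left, hc, hc] at hmem
      linarith

/-- One good index set is made affinely independent by an arbitrarily small perturbation that moves
its points one after another within their layers. -/
lemma exists_perturb_single [FiniteDimensional ℝ E] [Finite ι] {d : ℕ}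
    (hd : Module.finrank ℝ E = d + 1) {u : E} (hu : u ≠ 0) {τ : ι → ℝ} (T : Set ι)
    (hgood : GoodSet d τ T) {U : Set (ι → E)} (hU : IsOpen U) {c₀ : ι → E} (hc₀U : c₀ ∈ U)
    (hc₀ : ∀ j, ⟪c₀ j, u⟫ = τ j) :
    ∃ c ∈ U, (∀ j, ⟪c j, u⟫ = τ j) ∧ AffineIndependent ℝ (fun j : T => c j) := by
  classical
  induction T, toFinite T using Set.Finite.induction_on with
  | empty => exact ⟨c₀, hc₀U, hc₀, affineIndependent_of_subsingleton ℝ _⟩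
  | @insert i T hi _ ih =>
    have hcard := ncard_insert_of_notMem hi (toFinite T)
    have hgood' : GoodSet d τ T := by
      rcases hgood with h | ⟨h, -⟩ <;> exact Or.inl (by omega)
    obtain ⟨c₁, hc₁U, hc₁, hind⟩ := ih hgood'
    obtain ⟨q, hq, hqT⟩ := exists_notMem_span hd hu hc₁ hi hgood hind
    -- move the `i`-th point towards `q` by a small amount
    obtain ⟨s, hsU, hsT⟩ : ∃ s : ℝ, Function.update c₁ i (AffineMap.lineMap (c₁ i) q s) ∈ U ∧
        AffineMap.lineMap (c₁ i) q s ∉ affineSpan ℝ (c₁ '' T) := by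
      by_cases hmem : c₁ i ∈ affineSpan ℝ (c₁ '' T)
      · have hcont : Continuous (fun s : ℝ =>
            Function.update c₁ i (AffineMap.lineMap (c₁ i) q s)) :=
          continuous_const.update i AffineMap.lineMap_continuous
        have hev : ∀ᶠ s in 𝓝[≠] (0 : ℝ),
            Function.update c₁ i (AffineMap.lineMap (c₁ i) q s) ∈ U :=
          nhdsWithin_le_nhds (hcont.continuousAt.eventually_mem (hU.mem_nhds (by simpa using hc₁U)))
        obtain ⟨s, hs, hs0⟩ := (hev.and self_mem_nhdsWithin).exists
        refine ⟨s, hs, fun hsmem => hqT ?_⟩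
        have hs0 : s ≠ 0 := hs0
        have := AffineMap.lineMap_mem (s⁻¹) hmem hsmem
        rwa [AffineMap.lineMap_lineMap_right, inv_mul_cancel₀ hs0, AffineMap.lineMap_apply_one]
          at this
      · exact ⟨0, by simpa using hc₁U, by simpa using hmem⟩
    refine ⟨_, hsU, fun j => ?_, ?_⟩
    · rcases eq_or_ne j i with rfl | hj
      · rw [Function.update_self, AffineMap.lineMap_apply_module, inner_add_left, inner_smul_left,
          inner_smul_left, hq, hc₁]
        simp; ring
      · rw [Function.update_of_ne hj, hc₁]
    · set c := Function.update c₁ i (AffineMap.lineMap (c₁ i) q s) with hcdef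
      have hcT : ∀ j ∈ T, c j = c₁ j := fun j hj =>
        Function.update_of_ne (ne_of_mem_of_not_mem hj hi) _ _
      refine AffineIndependent.affineIndependent_of_notMem_span
        (i := (⟨i, mem_insert i T⟩ : (insert i T : Set ι))) ?_ ?_
      · have hmem : ∀ x : {y : (insert i T : Set ι) // y ≠ ⟨i, mem_insert i T⟩}, x.1.1 ∈ T :=
          fun x => (mem_insert_iff.1 x.1.2).resolve_left fun h => x.2 (Subtype.ext h)
        have := hind.comp_embedding
          (⟨fun x : {y : (insert i T : Set ι) // y ≠ ⟨i, mem_insert i T⟩} => (⟨x.1.1, hmem x⟩ : T),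
            fun x y h => by simpa [Subtype.ext_iff] using h⟩)
        have hfun : (fun x : {y : (insert i T : Set ι) // y ≠ ⟨i, mem_insert i T⟩} => c x.1.1) =
            fun x => c₁ x.1.1 := funext fun x => hcT _ (hmem x)
        rw [hfun]
        exact this
      · have himg : (fun x : (insert i T : Set ι) => c x) '' {x | x ≠ ⟨i, mem_insert i T⟩} ⊆
            c₁ '' T := by
          rintro _ ⟨x, hx, rfl⟩
          have hxT : x.1 ∈ T := (mem_insert_iff.1 x.2).resolve_left fun h => hx (Subtype.ext h)
          exact ⟨x.1, hxT, (hcT _ hxT).symm⟩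
        intro hmem
        apply hsT
        have := affineSpan_mono ℝ himg hmem
        simpa [hcdef] using this

/-- Configurations in general position are dense among those with prescribed heights. -/
lemma exists_perturb [FiniteDimensional ℝ E] [Finite ι] {d : ℕ}
    (hd : Module.finrank ℝ E = d + 1) {u : E} (hu : u ≠ 0) {τ : ι → ℝ} {v : ι → E}
    (hv : ∀ j, ⟪v j, u⟫ = τ j) :
    ∃ᶠ c in 𝓝 v, (∀ j, ⟪c j, u⟫ = τ j) ∧ GenPos d τ c := by
  classical
  have key : ∀ 𝒯 : Finset (Set ι), ∀ U : Set (ι → E), IsOpen U → v ∈ U →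
      ∃ c ∈ U, (∀ j, ⟪c j, u⟫ = τ j) ∧
        ∀ T ∈ 𝒯, GoodSet d τ T → AffineIndependent ℝ (fun j : T => c j) := by
    intro 𝒯
    induction 𝒯 using Finset.induction_on with
    | empty => exact fun U _ hvU => ⟨v, hvU, hv, by simp⟩
    | insert T 𝒯 _ ih =>
      intro U hU hvU
      obtain ⟨c, hcU, hc, hind⟩ := ih U hU hvU
      by_cases hT : GoodSet d τ T
      · have hopen : ∀ S : Set ι, IsOpen {c : ι → E | AffineIndependent ℝ (fun j : S => c j)} :=
          fun S => isOpen_setOfPred_affineIndependent.preimage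
            (f := fun (c : ι → E) (j : S) => c j) (by fun_prop)
        have hopen' : IsOpen (U ∩ ⋂ S ∈ {S ∈ 𝒯 | GoodSet d τ S},
            {c : ι → E | AffineIndependent ℝ (fun j : S => c j)}) :=
          hU.inter (isOpen_biInter_finset fun S _ => hopen S)
        obtain ⟨c', ⟨hc'U, hc'⟩, hlay, hind'⟩ := exists_perturb_single hd hu T hT hopen'
          (c₀ := c) ⟨hcU, by
            simp only [mem_iInter]
            intro S hS
            exact hind S (Finset.mem_filter.1 hS).1 (Finset.mem_filter.1 hS).2⟩ hc
        refine ⟨c', hc'U, hlay, fun S hS hSg => ?_⟩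
        rcases Finset.mem_insert.1 hS with rfl | hS
        · exact hind'
        · simp only [mem_iInter] at hc'
          exact hc' S (Finset.mem_filter.2 ⟨hS, hSg⟩)
      · refine ⟨c, hcU, hc, fun S hS hSg => ?_⟩
        rcases Finset.mem_insert.1 hS with rfl | hS
        · exact absurd hSg hT
        · exact hind S hS hSg
  rw [frequently_iff]
  intro W hW
  obtain ⟨U, hUW, hU, hvU⟩ := mem_nhds_iff.1 hW
  obtain ⟨c, hcU, hc, hind⟩ := key (toFinite (univ : Set (Set ι))).toFinset U hU hvU
  exact ⟨c, hUW hcU, hc, fun T hT => hind T (by simp) hT⟩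

/-- In general position, the points on a hyperplane are affinely independent unless the
hyperplane is parallel to the layers. -/
lemma indep_or_parallel [FiniteDimensional ℝ E] [Finite ι] {d : ℕ}
    (hd : Module.finrank ℝ E = d + 1) {u : E} (hu : u ≠ 0) {τ : ι → ℝ} {c : ι → E}
    (hc : ∀ j, ⟪c j, u⟫ = τ j) (hgp : GenPos d τ c) {h : E} (hh : h ≠ 0) (β : ℝ) :
    AffineIndependent ℝ (fun j : {j | ⟪h, c j⟫ = β} => c j) ∨ ∃ s : ℝ, s ≠ 0 ∧ h = s • u := by
  set T := {j | ⟪h, c j⟫ = β} with hTdef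
  by_cases hgood : GoodSet d τ T
  · exact Or.inl (hgp T hgood)
  right
  have hcard : d + 2 ≤ T.ncard := by
    by_contra hlt
    exact hgood (Or.inl (by omega))
  by_cases hmono : ∃ a, ∀ j ∈ T, τ j = a
  · obtain ⟨a, ha⟩ := hmono
    obtain ⟨T₀, hT₀, hcard₀⟩ := exists_subset_card_eq (s := T) (n := d + 1) (by omega)
    have hfr := finrank_of_affineIndependent (hgp T₀ (Or.inl hcard₀.le)) hcard₀
    have h1 : vectorSpan ℝ (c '' T₀) ≤ (ℝ ∙ h)ᗮ :=
      vectorSpan_le_orthogonal (β := β) fun j hj => hT₀ hj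
    have h2 : vectorSpan ℝ (c '' T₀) ≤ (ℝ ∙ u)ᗮ :=
      vectorSpan_le_orthogonal (β := a) fun j hj => by rw [real_inner_comm, hc, ha j (hT₀ hj)]
    have h3 : vectorSpan ℝ (c '' T₀) = (ℝ ∙ u)ᗮ :=
      Submodule.eq_of_le_of_finrank_eq h2 (by rw [hfr, finrank_orthogonal hd hu])
    rw [h3] at h1
    have h4 : h ∈ (ℝ ∙ u) := by
      have h5 := Submodule.orthogonal_le h1
      rw [Submodule.orthogonal_orthogonal, Submodule.orthogonal_orthogonal] at h5
      exact h5 (Submodule.mem_span_singleton_self h)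
    obtain ⟨s, rfl⟩ := Submodule.mem_span_singleton.1 h4
    exact ⟨s, fun hs => hh (by simp [hs]), rfl⟩
  · exfalso
    push Not at hmono
    obtain ⟨i, hi, -⟩ := hmono 0
    obtain ⟨j, hj, hij⟩ := hmono (τ i)
    have hpair : ({i, j} : Set ι) ⊆ T := by
      rintro x (rfl | rfl) <;> assumption
    obtain ⟨T₀, hpT, hT₀, hcard₀⟩ := exists_subsuperset_card_eq (n := d + 2) hpair
      (by rw [ncard_pair (fun h => hij (by rw [h]))]; omega) hcard
    have hg : GoodSet d τ T₀ := Or.inr ⟨hcard₀.le, fun ⟨a, ha⟩ => hij (by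
      rw [ha j (hpT (by simp)), ha i (hpT (by simp))])⟩
    have hfr := finrank_of_affineIndependent (hgp T₀ hg) (k := d + 1) hcard₀
    have h1 : vectorSpan ℝ (c '' T₀) ≤ (ℝ ∙ h)ᗮ :=
      vectorSpan_le_orthogonal (β := β) fun j hj => hT₀ hj
    have h2 := Submodule.finrank_mono h1
    rw [hfr, finrank_orthogonal hd hh] at h2
    omega

end Layers

/-! ### Stability under small perturbations -/

section Stability

variable {E : Type*} [NormedAddCommGroup E] [InnerProductSpace ℝ E] {ι : Type*}

lemma eventually_dist_lt [Finite ι] (v : ι → E) {δ : ℝ} (hδ : 0 < δ) :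
    ∀ᶠ c in 𝓝 v, ∀ j, dist (c j) (v j) < δ :=
  eventually_all.2 fun j =>
    ((continuous_apply j).tendsto v).eventually (Metric.ball_mem_nhds (v j) hδ)

/-- A family of points contains an affinely independent subfamily with the same span. -/
lemma exists_indep_subset {v : ι → E} (hv : Function.Injective v) (T : Set ι) :
    ∃ S ⊆ T, affineSpan ℝ (v '' S) = affineSpan ℝ (v '' T) ∧
      AffineIndependent ℝ (fun j : S => v j) := by
  obtain ⟨t, htT, hspan, hind⟩ := exists_affineIndependent ℝ E (v '' T)
  have himg : v '' (T ∩ v ⁻¹' t) = t := by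
    rw [image_inter_preimage]
    exact inter_eq_right.2 htT
  refine ⟨T ∩ v ⁻¹' t, inter_subset_left, by rw [himg, hspan], ?_⟩
  exact hind.comp_embedding ⟨fun j : (T ∩ v ⁻¹' t : Set ι) => (⟨v j, j.2.2⟩ : t),
    fun i j h => Subtype.ext (hv (by simpa [Subtype.ext_iff] using h))⟩

/-- Stability of a face `F` whose exposing normal `n` is not parallel to `u`: every nearby
configuration in general position has an exposed simplex, of the same dimension as `F`, whose
vertices come from affinely independent vertices of `F` spanning `F`. The simplex is found inside
the face of the perturbed polytope at the point `y` nearest to `x + ε n`, where `x` is a generic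
point of `F`. -/
lemma face_stable [FiniteDimensional ℝ E] [Finite ι] {d : ℕ}
    (hd : Module.finrank ℝ E = d + 1) {u : E} (hu : ‖u‖ = 1) {τ : ι → ℝ} {v : ι → E}
    (hinj : Function.Injective v) (hv : ∀ j, ⟪v j, u⟫ = τ j) (n : E) (α : ℝ)
    (hle : ∀ j, ⟪n, v j⟫ ≤ α) (hα : ∃ j, ⟪n, v j⟫ = α) (hn : ∀ s : ℝ, n ≠ s • u) :
    ∀ᶠ c in 𝓝 v, (∀ j, ⟪c j, u⟫ = τ j) → GenPos d τ c →
      ∃ S ⊆ {j | ⟪n, v j⟫ = α}, affineSpan ℝ (v '' S) = affineSpan ℝ (v '' {j | ⟪n, v j⟫ = α}) ∧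
        AffineIndependent ℝ (fun j : S => v j) ∧ AffineIndependent ℝ (fun j : S => c j) ∧
        IsExposed ℝ (convexHull ℝ (range c)) (convexHull ℝ (c '' S)) := by
  classical
  have hu0 : u ≠ 0 := by rintro rfl; simp at hu
  have hn0 : n ≠ 0 := fun h => hn 0 (by simp [h])
  set J := {j | ⟪n, v j⟫ = α} with hJ
  have hJne : (convexHull ℝ (v '' J)).Nonempty := by
    rw [convexHull_nonempty_iff, image_nonempty]; exact hα
  obtain ⟨x, hxF, hx⟩ := exists_generic
    (toFinite {S : Set ι | ¬ convexHull ℝ (v '' J) ⊆ affineSpan ℝ (v '' S)}).toFinset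
    (fun S => affineSpan ℝ (v '' S)) (convex_convexHull ℝ (v '' J)) hJne
    (fun S hS => by simpa using hS)
  have hnx : ⟪n, x⟫ = α := hull_eq (innerSL ℝ n) v J α (fun j hj => hj) hxF
  obtain ⟨ρ, hρ, hstab⟩ := exists_rho v x
  set N := ‖n‖ with hN
  have hNpos : 0 < N := norm_pos_iff.2 hn0
  -- `gap` is the squared length of the component of `n` orthogonal to `u`
  have hgap : 0 < N ^ 2 - ⟪n, u⟫ ^ 2 := by
    have h1 : n - ⟪n, u⟫ • u ≠ 0 := sub_ne_zero.2 (hn _)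
    have h2 : 0 < ‖n - ⟪n, u⟫ • u‖ ^ 2 := by positivity
    rw [norm_sub_sq_real, inner_smul_right, norm_smul, hu, mul_one, Real.norm_eq_abs, sq_abs] at h2
    nlinarith
  set gap := N ^ 2 - ⟪n, u⟫ ^ 2 with hgapdef
  -- `ε` and `δ` keep `y` within `ρ` of `x`, and the perturbed polytope below the
  -- level `α + ε * gap` of `n`
  set ε := ρ / (4 * N) with hε
  have hεpos : 0 < ε := by positivity
  have hεN : ε * N = ρ / 4 := by rw [hε]; field_simp
  set δ := min (ρ / 4) (ε * gap / (2 * N)) with hδ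
  have hδpos : 0 < δ := by positivity
  have hδρ : δ ≤ ρ / 4 := min_le_left _ _
  have hδgap : N * δ < ε * gap := by
    have h1 : N * δ ≤ N * (ε * gap / (2 * N)) :=
      mul_le_mul_of_nonneg_left (min_le_right _ _) hNpos.le
    have h2 : N * (ε * gap / (2 * N)) = ε * gap / 2 := by field_simp
    have h3 : 0 < ε * gap := by positivity
    linarith
  filter_upwards [eventually_dist_lt v hδpos] with c hc hlay hgp
  have hKle : ∀ w ∈ convexHull ℝ (range c), ⟪n, w⟫ ≤ α + N * δ := by
    intro w hw
    rw [← image_univ] at hw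
    refine hull_le (innerSL ℝ n) c univ _ (fun j _ => ?_) hw
    have h1 : ⟪n, c j⟫ = ⟪n, v j⟫ + ⟪n, c j - v j⟫ := by rw [inner_sub_right]; ring
    have h2 : ⟪n, c j - v j⟫ ≤ N * ‖c j - v j‖ := real_inner_le_norm _ _
    have h3 : ‖c j - v j‖ ≤ δ := by rw [← dist_eq_norm]; exact (hc j).le
    have h4 := mul_le_mul_of_nonneg_left h3 hNpos.le
    rw [innerSL_apply_apply, h1]
    linarith [hle j]
  obtain ⟨x', hx'K, hx'⟩ : ∃ x' ∈ convexHull ℝ (range c), dist x x' < δ := by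
    have hsub : convexHull ℝ (v '' J) ⊆ Metric.thickening δ (convexHull ℝ (range c)) := by
      refine convexHull_min ?_ ((convex_convexHull ℝ _).thickening δ)
      rintro _ ⟨j, hj, rfl⟩
      exact Metric.mem_thickening_iff.2 ⟨c j, subset_convexHull ℝ _ ⟨j, rfl⟩, by
        rw [dist_comm]; exact hc j⟩
    exact Metric.mem_thickening_iff.1 (hsub hxF)
  -- the point `y` of the perturbed polytope nearest to `z = x + ε n`
  set z := x + ε • n with hz
  obtain ⟨y, hyK, hymin⟩ := exists_norm_eq_iInf_of_complete_convex ⟨x', hx'K⟩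
    ((finite_range c).isCompact_convexHull ℝ).isComplete (convex_convexHull ℝ (range c)) z
  have hyle : ‖z - y‖ ≤ ‖z - x'‖ := by
    rw [hymin]
    exact ciInf_le ⟨0, by rintro _ ⟨w, rfl⟩; positivity⟩
      (⟨x', hx'K⟩ : convexHull ℝ (range c))
  have hsup := (norm_eq_iInf_iff_real_inner_le_zero (convex_convexHull ℝ (range c)) hyK).1 hymin
  have hzx : ‖z - x‖ = ρ / 4 := by
    rw [hz, add_sub_cancel_left, norm_smul, Real.norm_of_nonneg hεpos.le, hεN]
  have hyx : dist y x < ρ := by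
    have h1 : ‖z - x'‖ ≤ ‖z - x‖ + ‖x - x'‖ := norm_sub_le_norm_sub_add_norm_sub _ _ _
    have h2 : ‖y - x‖ ≤ ‖y - z‖ + ‖z - x‖ := norm_sub_le_norm_sub_add_norm_sub _ _ _
    rw [dist_eq_norm] at hx' ⊢
    rw [norm_sub_rev y z] at h2
    linarith
  have hnz : ⟪n, z⟫ = α + ε * N ^ 2 := by
    rw [hz, inner_add_right, inner_smul_right, real_inner_self_eq_norm_sq, hnx]
  set h := z - y with hh
  have hh0 : h ≠ 0 := by
    intro h0
    have hzy : z = y := sub_eq_zero.1 h0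
    have h1 := hKle y hyK
    rw [← hzy, hnz] at h1
    have h2 : ε * gap ≤ ε * N ^ 2 :=
      mul_le_mul_of_nonneg_left (by rw [hgapdef]; nlinarith [sq_nonneg ⟪n, u⟫]) hεpos.le
    linarith
  set β := ⟪h, y⟫ with hβ
  have hcβ : ∀ j, ⟪h, c j⟫ ≤ β := by
    intro j
    have := hsup (c j) (subset_convexHull ℝ _ ⟨j, rfl⟩)
    rw [inner_sub_right] at this
    linarith
  have hyT : y ∈ convexHull ℝ (c '' {j | ⟪h, c j⟫ = β}) := by
    have := mem_face (innerSL ℝ h) c univ β (fun j _ => hcβ j) (by simpa using hyK) rfl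
    simpa using this
  have hxT : x ∈ convexHull ℝ (v '' {j | ⟪h, c j⟫ = β}) :=
    hstab _ c (fun j => (hc j).trans (by linarith)) y hyT hyx
  rcases indep_or_parallel hd hu0 hlay hgp hh0 β with hind | ⟨s, hs, hsu⟩
  · have hxT2 := mem_face (innerSL ℝ n) v _ α (fun j _ => hle j) hxT hnx
    set T₂ := {j | j ∈ {j | ⟪h, c j⟫ = β} ∧ (innerSL ℝ n) (v j) = α} with hT₂
    have hT₂J : T₂ ⊆ J := fun j hj => hj.2
    have hsp : affineSpan ℝ (v '' T₂) = affineSpan ℝ (v '' J) := by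
      refine le_antisymm (affineSpan_mono ℝ (image_mono hT₂J)) ?_
      rw [affineSpan_le]
      refine (subset_convexHull ℝ _).trans ?_
      by_contra hcon
      exact hx T₂ (by simpa using hcon) (convexHull_subset_affineSpan _ hxT2)
    obtain ⟨S, hST, hspan, hSind⟩ := exists_indep_subset hinj T₂
    refine ⟨S, hST.trans hT₂J, hspan.trans hsp, hSind,
      affineIndependent_subset (fun j hj => (hST hj).1) hind, ?_⟩
    exact exposed_subsimplex c (innerSL ℝ h) β hcβ hind S fun j hj => (hST hj).1
  · -- here ``x` and `y` would have the same height, so that `y` would be `x` moved by the component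
    -- of `ε • n` orthogonal to `u`, which lies outside the perturbed polytope
    exfalso
    have hyu : ⟪u, y⟫ = β / s := by
      rw [hβ, hsu, real_inner_smul_left]; field_simp
    have hcu : ∀ j ∈ {j | ⟪h, c j⟫ = β}, ⟪u, v j⟫ = β / s := by
      intro j hj
      have h1 : ⟪h, c j⟫ = β := hj
      rw [hsu, real_inner_smul_left, real_inner_comm, hlay] at h1
      rw [real_inner_comm, hv, ← h1]; field_simp
    have hxu : ⟪u, x⟫ = β / s := hull_eq (innerSL ℝ u) v _ (β / s) hcu hxT
    have hs' : s = ε * ⟪n, u⟫ := by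
      have h1 : ⟪u, h⟫ = s := by
        rw [hsu, inner_smul_right, real_inner_self_eq_norm_sq, hu]; ring
      have h2 : ⟪u, h⟫ = ε * ⟪n, u⟫ := by
        rw [hh, hz, inner_sub_right, inner_add_right, inner_smul_right, hxu, hyu,
          real_inner_comm n u]
        ring
      rw [← h1, h2]
    have hny : ⟪n, y⟫ = α + ε * gap := by
      have h1 : y = z - s • u := by rw [← hsu, hh]; abel
      rw [h1, inner_sub_right, inner_smul_right, hnz, hs', hgapdef]
      ring
    have := hKle y hyK
    linarith

/-- Convex independence is stable under small perturbations. -/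
lemma notMem_stable [Finite ι] (v : ι → E)
    (hv : ∀ i, v i ∉ convexHull ℝ (v '' {j | j ≠ i})) :
    ∀ᶠ c in 𝓝 v, ∀ i, c i ∉ convexHull ℝ (c '' {j | j ≠ i}) := by
  refine eventually_all.2 fun i => ?_
  obtain ⟨ρ, hρ, hstab⟩ := exists_rho v (v i)
  filter_upwards [eventually_dist_lt v hρ] with c hc hmem
  exact hv i (hstab _ c hc _ hmem (hc i))

lemma hull_extreme {C : Set E} (hC : C.Finite) :
    convexHull ℝ ((convexHull ℝ C).extremePoints ℝ) = convexHull ℝ C := by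
  have h := closure_convexHull_extremePoints (hC.isCompact_convexHull ℝ) (convex_convexHull ℝ C)
  rwa [((hC.subset extremePoints_convexHull_subset).isClosed_convexHull ℝ).closure_eq] at h

/-- The vertices of the convex hull of a convexly independent finite family. -/
lemma extremePoints_eq_range [Finite ι] (c : ι → E)
    (hc : ∀ i, c i ∉ convexHull ℝ (c '' {j | j ≠ i})) :
    (convexHull ℝ (range c)).extremePoints ℝ = range c := by
  refine Subset.antisymm extremePoints_convexHull_subset ?_
  rintro _ ⟨i, rfl⟩
  by_contra hi
  apply hc i
  have hsub : (convexHull ℝ (range c)).extremePoints ℝ ⊆ c '' {j | j ≠ i} := by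
    intro w hw
    obtain ⟨j, rfl⟩ := extremePoints_convexHull_subset hw
    exact ⟨j, fun hji => hi (hji ▸ hw), rfl⟩
  have := convexHull_mono (𝕜 := ℝ) hsub
  rw [hull_extreme (finite_range c)] at this
  exact this (subset_convexHull ℝ _ ⟨i, rfl⟩)

lemma injective_of_notMem (c : ι → E)
    (hc : ∀ i, c i ∉ convexHull ℝ (c '' {j | j ≠ i})) : Function.Injective c := by
  intro i j hij
  by_contra hne
  exact hc i (subset_convexHull ℝ _ ⟨j, Ne.symm hne, hij.symm⟩)

/-- For a convexly independent family, the hull of a subfamily determines the subfamily. -/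
lemma hull_injective (c : ι → E) (hc : ∀ i, c i ∉ convexHull ℝ (c '' {j | j ≠ i}))
    {S T : Set ι} (h : convexHull ℝ (c '' S) = convexHull ℝ (c '' T)) : S = T := by
  have key : ∀ {S T : Set ι}, convexHull ℝ (c '' S) = convexHull ℝ (c '' T) → S ⊆ T := by
    intro S T h i hi
    by_contra hiT
    apply hc i
    have h1 : c i ∈ convexHull ℝ (c '' T) := h ▸ subset_convexHull ℝ _ ⟨i, hi, rfl⟩
    exact convexHull_mono (image_mono fun j hj => ne_of_mem_of_not_mem hj hiT) h1
  exact Subset.antisymm (key h) (key h.symm)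

lemma extreme_notMem {C : Set E} :
    ∀ i : (convexHull ℝ C).extremePoints ℝ,
      (i : E) ∉ convexHull ℝ ((fun j : (convexHull ℝ C).extremePoints ℝ => (j : E)) ''
        {j | j ≠ i}) := by
  rintro ⟨i, hi⟩ hmem
  have hsub : convexHull ℝ ((fun j : (convexHull ℝ C).extremePoints ℝ => (j : E)) ''
        {j | j ≠ ⟨i, hi⟩}) ⊆ convexHull ℝ C := by
    refine convexHull_min ?_ (convex_convexHull ℝ C)
    rintro _ ⟨j, -, rfl⟩
    exact extremePoints_subset j.2
  have := extremePoints_convexHull_subset (inter_extremePoints_subset_extremePoints_of_subset hsub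
    ⟨hmem, hi⟩)
  obtain ⟨j, hj, hji⟩ := this
  exact hj (Subtype.ext hji)

end Stability

/-! ### Faces of layered polytopes -/

section Assembly

lemma adim_hull_s2 {N : ℕ} (s : Set (EuclideanSpace ℝ (Fin N))) :
    adim (convexHull ℝ s) = Module.finrank ℝ (vectorSpan ℝ s) := by
  rw [adim, ← direction_affineSpan, affineSpan_convexHull, direction_affineSpan]

lemma adim_congr {N : ℕ} {s t : Set (EuclideanSpace ℝ (Fin N))}
    (h : affineSpan ℝ s = affineSpan ℝ t) : adim s = adim t := by
  rw [adim, adim, ← direction_affineSpan, h, direction_affineSpan]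

lemma adim_mono {N : ℕ} {s t : Set (EuclideanSpace ℝ (Fin N))} (h : s ⊆ t) : adim s ≤ adim t :=
  Submodule.finrank_mono (vectorSpan_mono ℝ h)

lemma exists_ncard_eq {N : ℕ} {ι : Type*} [Finite ι] {c : ι → EuclideanSpace ℝ (Fin N)} {S : Set ι}
    (hS : S.Nonempty) (h : AffineIndependent ℝ (fun j : S => c j)) :
    S.ncard = adim (convexHull ℝ (c '' S)) + 1 := by
  obtain ⟨k, hk⟩ : ∃ k, S.ncard = k + 1 :=
    Nat.exists_eq_succ_of_ne_zero ((ncard_pos (toFinite S)).2 hS).ne'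
  rw [adim_hull_s2, finrank_of_affineIndependent h hk, hk]

/-- A functional parallel to `u` exposes the part of the polytope in an extreme layer. -/
lemma parallel_face {E : Type*} [NormedAddCommGroup E] [InnerProductSpace ℝ E] {ι : Type*}
    {u : E} (c : ι → E) {s b : ℝ} (hs : s ≠ 0)
    (hle : ∀ j, s * ⟪c j, u⟫ ≤ s * b) (hb : ∃ j, ⟪c j, u⟫ = b) :
    {x ∈ convexHull ℝ (range c) | ∀ y ∈ convexHull ℝ (range c), ⟪s • u, y⟫ ≤ ⟪s • u, x⟫} =
      convexHull ℝ (range c) ∩ {x | ⟪x, u⟫ = b} := by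
  have hcomm : ∀ x, ⟪s • u, x⟫ = s * ⟪x, u⟫ := fun x => by
    rw [real_inner_smul_left, real_inner_comm]
  have hmax : ∀ y ∈ convexHull ℝ (range c), s * ⟪y, u⟫ ≤ s * b := by
    intro y hy
    rw [← image_univ] at hy
    rw [← hcomm]
    exact hull_le (innerSL ℝ (s • u)) c univ _ (fun j _ => by
      rw [innerSL_apply_apply, hcomm]; exact hle j) hy
  obtain ⟨j, hj⟩ := hb
  ext x
  constructor
  · rintro ⟨hx, hxm⟩
    refine ⟨hx, ?_⟩
    have h1 := hxm (c j) (subset_convexHull ℝ _ ⟨j, rfl⟩)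
    rw [hcomm, hcomm, hj] at h1
    exact mul_left_cancel₀ hs (le_antisymm (hmax x hx) h1)
  · rintro ⟨hx, hxb⟩
    refine ⟨hx, fun y hy => ?_⟩
    have hxb : ⟪x, u⟫ = b := hxb
    rw [hcomm, hcomm, hxb]
    exact hmax y hy

variable {d : ℕ} {ι : Type*} [Finite ι] {u : EuclideanSpace ℝ (Fin (d + 1))} {τ : ι → ℝ}
  {v : ι → EuclideanSpace ℝ (Fin (d + 1))}

/-- A set meeting two layers, one of them in a set containing a `d`-dimensional part `A`, has
dimension `d + 1`. -/
lemma adim_full (hu : u ≠ 0) {C A : Set (EuclideanSpace ℝ (Fin (d + 1)))} (hAC : A ⊆ C)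
    (hA : adim A = d) {a : ℝ} (hAa : ∀ p ∈ A, ⟪p, u⟫ = a) {q : EuclideanSpace ℝ (Fin (d + 1))}
    (hq : q ∈ C) (hqa : ⟪q, u⟫ ≠ a) (hAne : A.Nonempty) : d < adim C := by
  by_contra hlt
  have hfr : Module.finrank ℝ (EuclideanSpace ℝ (Fin (d + 1))) = d + 1 := by simp
  have h1 : vectorSpan ℝ A ≤ (ℝ ∙ u)ᗮ := by
    have := vectorSpan_le_orthogonal (c := id) (T := A) (h := u) (β := a)
      fun p hp => by rw [real_inner_comm]; exact hAa p hp
    simpa using this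
  have h2 : vectorSpan ℝ A = (ℝ ∙ u)ᗮ := Submodule.eq_of_le_of_finrank_eq h1 (by
    rw [finrank_orthogonal hfr hu]; exact hA)
  have h3 : vectorSpan ℝ A = vectorSpan ℝ C :=
    Submodule.eq_of_le_of_finrank_le (vectorSpan_mono ℝ hAC) (by
      have : adim C ≤ adim A := by omega
      exact this)
  obtain ⟨p, hp⟩ := hAne
  have h4 : q - p ∈ vectorSpan ℝ C := vsub_mem_vectorSpan ℝ hq (hAC hp)
  rw [← h3, h2, Submodule.mem_orthogonal_singleton_iff_inner_left, inner_sub_left, hAa p hp] at h4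
  exact hqa (by linarith)

/-- Stability of an arbitrary proper face. The facets in the bottom and top layers (heights `a`
and `b`) keep their vertex sets; all other faces are covered by `face_stable`. -/
lemma face_stable' (hu : ‖u‖ = 1) (hinj : Function.Injective v) (hv : ∀ j, ⟪v j, u⟫ = τ j)
    {a b : ℝ} (ha : ∀ j, a ≤ τ j) (hb : ∀ j, τ j ≤ b) (ha' : ∃ j, τ j = a) (hb' : ∃ j, τ j = b)
    (hda : adim (convexHull ℝ (range v) ∩ {x | ⟪x, u⟫ = a}) = d)
    (hdb : adim (convexHull ℝ (range v) ∩ {x | ⟪x, u⟫ = b}) = d)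
    (hdim : d < adim (convexHull ℝ (range v)))
    {F : Set (EuclideanSpace ℝ (Fin (d + 1)))} (hF : IsExposed ℝ (convexHull ℝ (range v)) F)
    (hne : F.Nonempty) (hFd : adim F ≤ d) :
    ∀ᶠ c in 𝓝 v, (∀ j, ⟪c j, u⟫ = τ j) → GenPos d τ c →
      ∃ S : Set ι, S.Nonempty ∧ affineSpan ℝ (v '' S) = affineSpan ℝ F ∧
        adim (convexHull ℝ (c '' S)) = adim F ∧
        IsExposed ℝ (convexHull ℝ (range c)) (convexHull ℝ (c '' S)) := by
  have hu0 : u ≠ 0 := by rintro rfl; simp at hu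
  have hfr : Module.finrank ℝ (EuclideanSpace ℝ (Fin (d + 1))) = d + 1 := by simp
  obtain ⟨l, α, hle, hα, hFeq⟩ := exposed_data v hF hne
  obtain ⟨n, rfl⟩ : ∃ n, innerSL ℝ n = l :=
    ⟨(InnerProductSpace.toDual ℝ _).symm l, by
      ext x; rw [innerSL_apply_apply, InnerProductSpace.toDual_symm_apply]⟩
  have hset := face_eq (innerSL ℝ n) v α hle hα
  rw [← hFeq] at hset
  simp only [innerSL_apply_apply] at hle hα hFeq hset
  set J := {j | ⟪n, v j⟫ = α} with hJ
  have hspF : affineSpan ℝ (v '' J) = affineSpan ℝ F := by rw [hFeq, affineSpan_convexHull]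
  by_cases hn : ∀ s : ℝ, n ≠ s • u
  · filter_upwards [face_stable hfr hu hinj hv n α hle hα hn] with c hc hlay hgp
    obtain ⟨S, hSJ, hspan, hvS, hcS, hexp⟩ := hc hlay hgp
    have hSne : S.Nonempty := by
      have h1 : ((affineSpan ℝ (v '' S) : AffineSubspace ℝ (EuclideanSpace ℝ (Fin (d + 1)))) :
          Set (EuclideanSpace ℝ (Fin (d + 1)))).Nonempty := by
        rw [hspan, hspF]
        exact hne.mono (subset_affineSpan ℝ F)
      exact image_nonempty.1 ((affineSpan_nonempty (k := ℝ)).1 h1)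
    refine ⟨S, hSne, hspan.trans hspF, ?_, hexp⟩
    have h1 := exists_ncard_eq hSne hvS
    have h2 := exists_ncard_eq hSne hcS
    have h3 : adim (convexHull ℝ (v '' S)) = adim F :=
      adim_congr (by rw [affineSpan_convexHull, hspan, hspF])
    omega
  · push Not at hn
    obtain ⟨s, hs⟩ := hn
    have hs0 : s ≠ 0 := by
      rintro rfl
      rw [zero_smul] at hs
      have : F = convexHull ℝ (range v) := by
        rw [← hset, hs]
        simp
      rw [this] at hFd
      omega
    have hdF : adim F = d := by
      rcases lt_or_gt_of_ne hs0 with hneg | hpos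
      · rw [← hset, hs, parallel_face v (b := a) hs0 (fun j => by
          rw [hv]; exact mul_le_mul_of_nonpos_left (ha j) hneg.le) (by simpa [hv] using ha'), hda]
      · rw [← hset, hs, parallel_face v (b := b) hs0 (fun j => by
          rw [hv]; exact mul_le_mul_of_nonneg_left (hb j) hpos.le) (by simpa [hv] using hb'), hdb]
    refine Eventually.of_forall fun c hlay hgp => ?_
    have hnc : ∀ j, ⟪n, c j⟫ = ⟪n, v j⟫ := fun j => by
      rw [hs, real_inner_smul_left, real_inner_smul_left, real_inner_comm, hlay,
        real_inner_comm, hv]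
    have hJc : J = {j | (innerSL ℝ n) (c j) = α} := by
      ext j
      simp only [innerSL_apply_apply, hnc, hJ]
    have hexp := isExposed_hull (innerSL ℝ n) c α (fun j => by
      rw [innerSL_apply_apply, hnc]; exact hle j)
    rw [← hJc] at hexp
    refine ⟨J, hα, hspF, ?_, hexp⟩
    rw [hdF]
    refine le_antisymm ?_ ?_
    · rw [adim_hull_s2]
      exact (Submodule.finrank_mono
        (vectorSpan_le_orthogonal (h := n) (β := α) fun j hj => by rw [hnc]; exact hj)).trans
        (finrank_orthogonal hfr (u := n) (by rw [hs]; exact smul_ne_zero hs0 hu0)).le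
    · obtain ⟨S, hSJ, hspan, hvS⟩ := exists_indep_subset hinj J
      have hSne : S.Nonempty := by
        have h1 : ((affineSpan ℝ (v '' S) : AffineSubspace ℝ (EuclideanSpace ℝ (Fin (d + 1)))) :
          Set (EuclideanSpace ℝ (Fin (d + 1)))).Nonempty := by
          rw [hspan, hspF]
          exact hne.mono (subset_affineSpan ℝ F)
        exact image_nonempty.1 ((affineSpan_nonempty (k := ℝ)).1 h1)
      have h1 := exists_ncard_eq hSne hvS
      have h3 : adim (convexHull ℝ (v '' S)) = adim F :=
        adim_congr (by rw [affineSpan_convexHull, hspan, hspF])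
      have h2 := exists_ncard_eq hSne (hgp S (Or.inl (by omega)))
      have h4 : adim (convexHull ℝ (c '' S)) ≤ adim (convexHull ℝ (c '' J)) :=
        adim_mono (convexHull_mono (image_mono hSJ))
      omega

/-- Proper faces of a polytope in general position are simplices, except for its intersections
with the bottom and top layers. -/
lemma isSimplexSet_face (hu : ‖u‖ = 1) (hv : ∀ j, ⟪v j, u⟫ = τ j) (hgp : GenPos d τ v)
    {a b : ℝ} (ha : ∀ j, a ≤ τ j) (hb : ∀ j, τ j ≤ b) (ha' : ∃ j, τ j = a) (hb' : ∃ j, τ j = b)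
    {F : Set (EuclideanSpace ℝ (Fin (d + 1)))} (hF : IsExposed ℝ (convexHull ℝ (range v)) F)
    (hne : F.Nonempty) (hFK : F ≠ convexHull ℝ (range v))
    (hFa : F ≠ convexHull ℝ (range v) ∩ {x | ⟪x, u⟫ = a})
    (hFb : F ≠ convexHull ℝ (range v) ∩ {x | ⟪x, u⟫ = b}) : IsSimplexSet F := by
  have hu0 : u ≠ 0 := by rintro rfl; simp at hu
  have hfr : Module.finrank ℝ (EuclideanSpace ℝ (Fin (d + 1))) = d + 1 := by simp
  obtain ⟨l, α, hle, hα, hFeq⟩ := exposed_data v hF hne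
  obtain ⟨n, rfl⟩ : ∃ n, innerSL ℝ n = l :=
    ⟨(InnerProductSpace.toDual ℝ _).symm l, by
      ext x; rw [innerSL_apply_apply, InnerProductSpace.toDual_symm_apply]⟩
  have hset := face_eq (innerSL ℝ n) v α hle hα
  rw [← hFeq] at hset
  simp only [innerSL_apply_apply] at hle hα hFeq hset
  have hn0 : n ≠ 0 := by
    rintro rfl
    apply hFK
    rw [← hset]
    simp
  rcases indep_or_parallel hfr hu0 hv hgp hn0 α with hind | ⟨s, hs0, hs⟩
  · have h1 := hind.range
    rw [← image_eq_range] at h1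
    refine h1.mono ?_
    rw [hFeq]
    exact extremePoints_convexHull_subset
  · exfalso
    rcases lt_or_gt_of_ne hs0 with hneg | hpos
    · exact hFa (by rw [← hset, hs, parallel_face v (b := a) hs0 (fun j => by
        rw [hv]; exact mul_le_mul_of_nonpos_left (ha j) hneg.le) (by simpa [hv] using ha')])
    · exact hFb (by rw [← hset, hs, parallel_face v (b := b) hs0 (fun j => by
        rw [hv]; exact mul_le_mul_of_nonneg_left (hb j) hpos.le) (by simpa [hv] using hb')])

/-- If a polytope has a point in a layer bounding all generators from one side, then it has a
generator in that layer. -/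
lemma exists_height {s b : ℝ} (hs : s ≠ 0) (hle : ∀ j, s * ⟪v j, u⟫ ≤ s * b)
    {p : EuclideanSpace ℝ (Fin (d + 1))} (hp : p ∈ convexHull ℝ (range v)) (hpb : ⟪p, u⟫ = b) :
    ∃ j, ⟪v j, u⟫ = b := by
  have hcomm : ∀ x, (innerSL ℝ (s • u)) x = s * ⟪x, u⟫ := fun x => by
    rw [innerSL_apply_apply, real_inner_smul_left, real_inner_comm]
  have h1 := mem_face (innerSL ℝ (s • u)) v univ (s * b) (fun j _ => by rw [hcomm]; exact hle j)
    (by simpa using hp) (by rw [hcomm, hpb])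
  obtain ⟨_, j, hj, rfl⟩ := convexHull_nonempty_iff.1 ⟨p, h1⟩
  have h2 := hj.2
  rw [hcomm] at h2
  exact ⟨j, mul_left_cancel₀ hs h2⟩

end Assembly

theorem stmt2 (d m : ℕ) (hd : 2 ≤ d) (hm : 2 ≤ m)
    (u : EuclideanSpace ℝ (Fin (d + 1))) (hu : ‖u‖ = 1)
    (t : Fin m → ℝ) (ht : StrictMono t)
    (P : Fin m → Set (EuclideanSpace ℝ (Fin (d + 1))))
    (hfin : ∀ i, (P i).Finite)
    (hsub : ∀ i, P i ⊆ {x | ⟪x, u⟫ = t i})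
    (hdim : ∀ i, adim (convexHull ℝ (P i)) = d) :
    ∃ P' : Fin m → Set (EuclideanSpace ℝ (Fin (d + 1))),
      (∀ i, (P' i).Finite) ∧
      (∀ i, P' i ⊆ {x | ⟪x, u⟫ = t i}) ∧
      ((convexHull ℝ (⋃ i, P' i)).extremePoints ℝ).ncard
        = ((convexHull ℝ (⋃ i, P i)).extremePoints ℝ).ncard ∧
      (∀ F : Set (EuclideanSpace ℝ (Fin (d + 1))),
        IsExposed ℝ (convexHull ℝ (⋃ i, P' i)) F → F.Nonempty →
        F ≠ convexHull ℝ (⋃ i, P' i) →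
        F ≠ convexHull ℝ (⋃ i, P' i) ∩ {x | ⟪x, u⟫ = t ⟨0, by omega⟩} →
        F ≠ convexHull ℝ (⋃ i, P' i) ∩ {x | ⟪x, u⟫ = t ⟨m - 1, by omega⟩} →
        IsSimplexSet F) ∧
      (∀ k, 1 ≤ k → k ≤ d →
        fCount (convexHull ℝ (⋃ i, P i)) k ≤ fCount (convexHull ℝ (⋃ i, P' i)) k) := by
  classical
  have hu0 : u ≠ 0 := by rintro rfl; simp at hu
  have hfr : Module.finrank ℝ (EuclideanSpace ℝ (Fin (d + 1))) = d + 1 := by simp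
  set i₀ : Fin m := ⟨0, by omega⟩ with hi₀
  set i₁ : Fin m := ⟨m - 1, by omega⟩ with hi₁
  have hi01 : t i₀ < t i₁ := ht (by simp only [hi₀, hi₁, Fin.mk_lt_mk]; omega)
  have hmin : ∀ i, t i₀ ≤ t i := fun i => ht.monotone (Fin.mk_le_of_le_val (Nat.zero_le _))
  have hmax : ∀ i, t i ≤ t i₁ := fun i => ht.monotone (by
    rw [Fin.le_def]; simp only [hi₁]; omega)
  have hPfin : (⋃ i, P i).Finite := finite_iUnion hfin
  have hPne : ∀ i, (P i).Nonempty := by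
    intro i
    by_contra hemp
    rw [not_nonempty_iff_eq_empty] at hemp
    have h1 := hdim i
    rw [hemp, adim_hull_s2, vectorSpan_empty, finrank_bot] at h1
    omega
  set K := convexHull ℝ (⋃ i, P i) with hK
  have hextP : K.extremePoints ℝ ⊆ ⋃ i, P i := extremePoints_convexHull_subset
  -- the configuration to be perturbed consists of the vertices only
  have hfinι : Finite (K.extremePoints ℝ) := (hPfin.subset hextP).to_subtype
  let v : K.extremePoints ℝ → EuclideanSpace ℝ (Fin (d + 1)) := fun j => j
  have hvK : convexHull ℝ (range v) = K := by
    have : range v = K.extremePoints ℝ := Subtype.range_coe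
    rw [this]
    exact hull_extreme hPfin
  have hinj : Function.Injective v := Subtype.val_injective
  have hlay : ∀ j : K.extremePoints ℝ, ∃ i, ⟪v j, u⟫ = t i := by
    intro j
    obtain ⟨i, hi⟩ := mem_iUnion.1 (hextP j.2)
    exact ⟨i, hsub i hi⟩
  choose lay hlay using hlay
  have hPK : ∀ i, P i ⊆ K := fun i => (subset_iUnion P i).trans (subset_convexHull ℝ _)
  have ha : ∀ j, t i₀ ≤ t (lay j) := fun j => hmin _
  have hb : ∀ j, t (lay j) ≤ t i₁ := fun j => hmax _
  have ha' : ∃ j, t (lay j) = t i₀ := by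
    obtain ⟨p, hp⟩ := hPne i₀
    obtain ⟨j, hj⟩ := exists_height (v := v) (u := u) (s := -1) (b := t i₀) (by norm_num)
      (fun j => by rw [hlay]; linarith [ha j]) (by rw [hvK]; exact hPK i₀ hp) (hsub i₀ hp)
    exact ⟨j, by rw [← hlay, hj]⟩
  have hb' : ∃ j, t (lay j) = t i₁ := by
    obtain ⟨p, hp⟩ := hPne i₁
    obtain ⟨j, hj⟩ := exists_height (v := v) (u := u) (s := 1) (b := t i₁) (by norm_num)
      (fun j => by rw [hlay]; linarith [hb j]) (by rw [hvK]; exact hPK i₁ hp) (hsub i₁ hp)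
    exact ⟨j, by rw [← hlay, hj]⟩
  have hlayer : ∀ i, adim (convexHull ℝ (range v) ∩ {x | ⟪x, u⟫ = t i}) = d := by
    intro i
    rw [hvK]
    refine le_antisymm ?_ ?_
    · refine le_trans ?_ (finrank_orthogonal hfr hu0).le
      have := vectorSpan_le_orthogonal (c := id) (T := K ∩ {x | ⟪x, u⟫ = t i}) (h := u)
        (β := t i) fun p hp => by rw [real_inner_comm]; exact hp.2
      rw [image_id] at this
      exact Submodule.finrank_mono this
    · have h1 : adim (P i) = d := (adim_hull_s2 (P i)).symm.trans (hdim i)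
      exact h1.ge.trans <| adim_mono (subset_inter (hPK i) (hsub i))
  have hfull : d < adim (convexHull ℝ (range v)) := by
    obtain ⟨q, hq⟩ := hPne i₁
    have hq' : ⟪q, u⟫ = t i₁ := hsub i₁ hq
    rw [hvK]
    refine adim_full hu0 (A := P i₀) (hPK i₀) ?_ (a := t i₀) (hsub i₀) (hPK i₁ hq)
      (by rw [hq']; exact hi01.ne') (hPne i₀)
    exact (adim_hull_s2 (P i₀)).symm.trans (hdim i₀)
  have hfaces : ∀ᶠ c in 𝓝 v,
      ∀ F ∈ {F | IsExposed ℝ (convexHull ℝ (range v)) F ∧ F.Nonempty}, adim F ≤ d →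
        (∀ j, ⟪c j, u⟫ = t (lay j)) → GenPos d (fun j => t (lay j)) c →
        ∃ S : Set (K.extremePoints ℝ), S.Nonempty ∧ affineSpan ℝ (v '' S) = affineSpan ℝ F ∧
          adim (convexHull ℝ (c '' S)) = adim F ∧
          IsExposed ℝ (convexHull ℝ (range c)) (convexHull ℝ (c '' S)) := by
    refine (eventually_all_finite (finite_faces_s2 v)).2 fun F hF => ?_
    by_cases hFd : adim F ≤ d
    · filter_upwards [face_stable' hu hinj hlay ha hb ha' hb' (hlayer i₀) (hlayer i₁) hfull
        hF.1 hF.2 hFd] with c hc _ using hc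
    · exact Eventually.of_forall fun _ h => absurd h hFd
  obtain ⟨c, ⟨hclay, hgp⟩, hcF, hcv⟩ := ((exists_perturb hfr hu0 hlay).and_eventually
    (hfaces.and (notMem_stable v extreme_notMem))).exists
  have hunion : (⋃ i, c '' {j | lay j = i}) = range c := by
    ext x
    simp
  refine ⟨fun i => c '' {j | lay j = i}, fun i => toFinite _, ?_, ?_, ?_, ?_⟩
  · rintro i _ ⟨j, rfl, rfl⟩
    exact hclay j
  · rw [hunion, extremePoints_eq_range c hcv, ← image_univ,
      ncard_image_of_injective _ (injective_of_notMem c hcv), ncard_univ, Nat.card_coe_set_eq]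
  · rw [hunion]
    intro F hF hne h1 h2 h3
    exact isSimplexSet_face hu hclay hgp ha hb ha' hb' hF hne h1 h2 h3
  · intro k _ hkd
    have hKv : fCount K k = fCount (convexHull ℝ (range v)) k := by rw [hvK]
    rw [hunion, hKv]
    have hex : ∀ F : Set (EuclideanSpace ℝ (Fin (d + 1))), ∃ S : Set (K.extremePoints ℝ),
        IsExposed ℝ (convexHull ℝ (range v)) F ∧ F.Nonempty ∧ adim F = k →
        S.Nonempty ∧ affineSpan ℝ (v '' S) = affineSpan ℝ F ∧
          adim (convexHull ℝ (c '' S)) = adim F ∧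
          IsExposed ℝ (convexHull ℝ (range c)) (convexHull ℝ (c '' S)) := by
      intro F
      by_cases hF : IsExposed ℝ (convexHull ℝ (range v)) F ∧ F.Nonempty ∧ adim F = k
      · obtain ⟨S, hS⟩ := hcF F ⟨hF.1, hF.2.1⟩ (hF.2.2.trans_le hkd) hclay hgp
        exact ⟨S, fun _ => hS⟩
      · exact ⟨∅, fun h => absurd h hF⟩
    choose S hS using hex
    refine ncard_le_ncard_of_injOn (fun F => convexHull ℝ (c '' S F)) ?_ ?_
      ((finite_faces_s2 c).subset fun F hF => ⟨hF.1, hF.2.1⟩)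
    · intro F hF
      obtain ⟨h1, -, h3, h4⟩ := hS F hF
      exact ⟨h4, convexHull_nonempty_iff.2 (h1.image c), h3.trans hF.2.2⟩
    · intro F hF G hG hFG
      have hSS : S F = S G := hull_injective c hcv hFG
      refine face_inj v hF.1 hF.2.1 hG.1 hG.2.1 ?_
      rw [← (hS F hF).2.1, ← (hS G hG).2.1, hSS]
end
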